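/- Under Assumptions 1–4 there exist constants s₁ > 0, s₂ > 0, ẽ > 0, an integer N ≥ 1 and a finite constant b̃ such that the function V(x) = 1 + |z₁(x₁)|^{2s₀} + s₁‖z₂(x₁)‖_*^{2s₀α} + s₂‖ξ(x)‖_•^{b s₀} satisfies, for every x ∈ ℝ^{p+q}, E[V(Y₁) | Y₀ = x] ≤ V(x) − ẽ·V(x)^α + b̃·1_{A_N}(x), where A_N = { x ∈ ℝ^{p+q} : |z₁(x₁)|^{2s₀} ≤ N, ‖z₂(x₁)‖_*^{2s₀α} ≤ N, ‖ξ(x)‖_•^{b s₀ α} ≤ N }. That is, the chain satisfies the subgeometric drift Condition D with φ(v) = ẽ v^α and petite-candidate set A_N. -/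

import Mathlib

open MeasureTheory Filter

noncomputable section

/-! ### Generic norm notions -/

/-- A vector norm on ℝ^d, given as a function satisfying the norm axioms. -/
def IsVectorNorm {d : ℕ} (N : (Fin d → ℝ) → ℝ) : Prop :=
  (∀ x, 0 ≤ N x) ∧ (∀ x, N x = 0 ↔ x = 0) ∧
  (∀ (c : ℝ) (x : Fin d → ℝ), N (c • x) = |c| * N x) ∧
  (∀ x y : Fin d → ℝ, N (x + y) ≤ N x + N y)

/-- A vector norm on ℝ^d is monotone if |x_i| ≤ |y_i| for all i implies ‖x‖ ≤ ‖y‖. -/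
def IsMonotoneNorm {d : ℕ} (N : (Fin d → ℝ) → ℝ) : Prop :=
  ∀ x y : Fin d → ℝ, (∀ i, |x i| ≤ |y i|) → N x ≤ N y

/-- The matrix norm induced by a vector norm N: |||A||| = sup_{N x = 1} N (A x). -/
def inducedMatNorm {d : ℕ} (N : (Fin d → ℝ) → ℝ)
    (A : Matrix (Fin d) (Fin d) ℝ) : ℝ :=
  sSup {c : ℝ | ∃ x : Fin d → ℝ, N x = 1 ∧ c = N (A.mulVec x)}

/-! ### The AR–ARCH model

The state at time t is Y_t = (y_t, …, y_{t−p−q+1}) ∈ ℝ^{p+q} (0-indexed in Lean: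
coordinate i of the state holds y_{t−i}). -/

/-- Coordinate access for a state vector, 0-indexed, junk value 0 outside the range. -/
def coordVal {n : ℕ} (x : Fin n → ℝ) (i : ℕ) : ℝ :=
  if h : i < n then x ⟨i, h⟩ else 0

/-- u_{−j}(x) = x_{j+1} − π₁x_{j+2} − ⋯ − π_{p−1}x_{j+p} (1-indexed), j = 0,…,q. -/
def uLag (p q : ℕ) (πc : ℕ → ℝ) (x : Fin (p + q) → ℝ) (j : ℕ) : ℝ :=
  coordVal x j - ∑ i ∈ Finset.Icc 1 (p - 1), πc i * coordVal x (j + i)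

/-- z₁(x₁) = x₁ − π₁x₂ − ⋯ − π_{p−1}x_p. -/
def z1 (p q : ℕ) (πc : ℕ → ℝ) (x : Fin (p + q) → ℝ) : ℝ := uLag p q πc x 0

/-- z₂(x₁) = (x₂, …, x_p) ∈ ℝ^{p−1}. -/
def z2 (p q : ℕ) (x : Fin (p + q) → ℝ) : Fin (p - 1) → ℝ :=
  fun i => coordVal x ((i : ℕ) + 1)

/-- e_{−j}(x) = u_{−j}(x) − g(u_{−j−1}(x)), j = 0,…,q−1. -/
def eLag (p q : ℕ) (πc : ℕ → ℝ) (g : ℝ → ℝ) (x : Fin (p + q) → ℝ) (j : ℕ) : ℝ :=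
  uLag p q πc x j - g (uLag p q πc x (j + 1))

/-- ξ(x) = (e₀(x)², …, e_{1−q}(x)²) ∈ ℝ^q. -/
def xiVec (p q : ℕ) (πc : ℕ → ℝ) (g : ℝ → ℝ) (x : Fin (p + q) → ℝ) : Fin q → ℝ :=
  fun j => (eLag p q πc g x (j : ℕ)) ^ 2

/-- The squared conditional volatility
σ(x)² = ζ₀(x)ω + Σ_{i=1}^q α_iζ_i(x)e_{1−i}(x)². -/
def sigma2 (p q : ℕ) (πc : ℕ → ℝ) (g : ℝ → ℝ) (ω : ℝ) (αc : ℕ → ℝ)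
    (ζ : ℕ → (Fin (p + q) → ℝ) → ℝ) (x : Fin (p + q) → ℝ) : ℝ :=
  ζ 0 x * ω + ∑ i ∈ Finset.Icc 1 q, αc i * ζ i x * (eLag p q πc g x (i - 1)) ^ 2

/-- One step of the chain from state x with innovation ε = e:
the new first coordinate is π₁x₁+⋯+π_{p−1}x_{p−1} + g(z₁(x₁)) + σ(x)e and the other
coordinates are shifted. -/
def oneStep (p q : ℕ) (πc : ℕ → ℝ) (g : ℝ → ℝ) (ω : ℝ) (αc : ℕ → ℝ)
    (ζ : ℕ → (Fin (p + q) → ℝ) → ℝ) (x : Fin (p + q) → ℝ) (e : ℝ) :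
    Fin (p + q) → ℝ :=
  fun i => if (i : ℕ) = 0 then
      (∑ k ∈ Finset.Icc 1 (p - 1), πc k * coordVal x (k - 1)) + g (z1 p q πc x)
        + Real.sqrt (sigma2 p q πc g ω αc ζ x) * e
    else coordVal x ((i : ℕ) - 1)

/-- The one-step transition kernel P(x; ·): the law of Y₁ given Y₀ = x, με being the
law of the innovation ε₁. -/
def kernelP (p q : ℕ) (πc : ℕ → ℝ) (g : ℝ → ℝ) (ω : ℝ) (αc : ℕ → ℝ)
    (ζ : ℕ → (Fin (p + q) → ℝ) → ℝ) (με : Measure ℝ) (x : Fin (p + q) → ℝ) :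
    Measure (Fin (p + q) → ℝ) :=
  με.map (oneStep p q πc g ω αc ζ x)

/-- The n-step transition kernel P^n(x; ·). -/
def kernelPn (p q : ℕ) (πc : ℕ → ℝ) (g : ℝ → ℝ) (ω : ℝ) (αc : ℕ → ℝ)
    (ζ : ℕ → (Fin (p + q) → ℝ) → ℝ) (με : Measure ℝ) :
    ℕ → (Fin (p + q) → ℝ) → Measure (Fin (p + q) → ℝ)
  | 0, x => Measure.dirac x
  | (n + 1), x => (kernelPn p q πc g ω αc ζ με n x).bind (kernelP p q πc g ω αc ζ με)

/-- The f-norm ‖μ − ν‖_f = sup{ |∫f₀dμ − ∫f₀dν| : f₀ measurable, |f₀| ≤ f } of the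
difference of two (finite) measures.  With f ≡ 1 it is the total variation norm. -/
def fNormDiff {S : Type*} [MeasurableSpace S] (μ ν : Measure S) (f : S → ℝ) : ℝ :=
  sSup {c : ℝ | ∃ f₀ : S → ℝ, Measurable f₀ ∧ (∀ y, |f₀ y| ≤ f y) ∧
    c = |(∫ y, f₀ y ∂μ) - ∫ y, f₀ y ∂ν|}

/-- The random companion matrix Λ_t with first row (α₁ε²,…,α_qε²) and ones on the
subdiagonal, as a function of the realization e of ε_t. -/
def lambdaMat (q : ℕ) (αc : ℕ → ℝ) (e : ℝ) : Matrix (Fin q) (Fin q) ℝ :=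
  Matrix.of fun i j =>
    if (i : ℕ) = 0 then αc ((j : ℕ) + 1) * e ^ 2
    else if (i : ℕ) = (j : ℕ) + 1 then 1 else 0

/-- The (p−1)×(p−1) companion matrix Π₁ with first row (π₁,…,π_{p−1}) and ones on the
subdiagonal. -/
def piMatOne (p : ℕ) (πc : ℕ → ℝ) : Matrix (Fin (p - 1)) (Fin (p - 1)) ℝ :=
  Matrix.of fun i j =>
    if (i : ℕ) = 0 then πc ((j : ℕ) + 1)
    else if (i : ℕ) = (j : ℕ) + 1 then 1 else 0

/-! ### Assumptions 1–4 -/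

/-- Assumption 1: the innovation law is a probability measure with mean zero, unit
variance, and a Lebesgue density bounded away from zero on compact subsets of ℝ.
(Independence of the ε_t and of the initial values is built into the Markov-kernel
formulation of the model.) -/
def Assump1 (με : Measure ℝ) : Prop :=
  IsProbabilityMeasure με ∧ (∫ e, e ∂με) = 0 ∧ (∫ e, e ^ 2 ∂με) = 1 ∧
  ∃ dens : ℝ → ℝ, Measurable dens ∧ (∀ e, 0 ≤ dens e) ∧
    με = MeasureTheory.volume.withDensity (fun e => ENNReal.ofReal (dens e)) ∧
    ∀ K : Set ℝ, IsCompact K → ∃ c : ℝ, 0 < c ∧ ∀ e ∈ K, c ≤ dens e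

/-- Assumption 2(i): all roots of 1 − π₁z − ⋯ − π_{p−1}z^{p−1} lie outside the unit
circle. -/
def Assump2i (p : ℕ) (πc : ℕ → ℝ) : Prop :=
  ∀ z : ℂ, (1 - ∑ i ∈ Finset.Icc 1 (p - 1), (πc i : ℂ) * z ^ i) = 0 →
    1 < ‖z‖

/-- Assumption 2(ii): g is measurable, locally bounded, |g(u)| → ∞ as |u| → ∞, and
|g(u)| ≤ (1 − r|u|^{−ρ})|u| for |u| ≥ M₀, |g(u)| ≤ K₀ for |u| ≤ M₀. -/
def Assump2ii (g : ℝ → ℝ) (r M₀ K₀ ρ : ℝ) : Prop :=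
  Measurable g ∧
  (∀ K : Set ℝ, IsCompact K → ∃ B : ℝ, ∀ u ∈ K, |g u| ≤ B) ∧
  Tendsto (fun u : ℝ => |g u|) (cocompact ℝ) atTop ∧
  0 < r ∧ 0 < M₀ ∧ 0 < K₀ ∧ 0 < ρ ∧ ρ < 2 ∧
  (∀ u : ℝ, M₀ ≤ |u| → |g u| ≤ (1 - r * |u| ^ (-ρ)) * |u|) ∧
  (∀ u : ℝ, |u| ≤ M₀ → |g u| ≤ K₀)

/-- Assumption 3: ω > 0, α_i ≥ 0 with Σ_{i=1}^q α_i < 1, and each ζ_i takes values in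
(0,1]. -/
def Assump3 (p q : ℕ) (ω : ℝ) (αc : ℕ → ℝ)
    (ζ : ℕ → (Fin (p + q) → ℝ) → ℝ) : Prop :=
  0 < ω ∧ (∀ i, 1 ≤ i → i ≤ q → 0 ≤ αc i) ∧
  (∑ i ∈ Finset.Icc 1 q, αc i) < 1 ∧
  ∀ i, i ≤ q → ∀ x, 0 < ζ i x ∧ ζ i x ≤ 1

/-- The constants s₀ ≥ 1 and b ≥ 1 satisfy b = 1 when s₀ = 1 and
b > (2s₀−ρ)/(s₀(2−ρ)) when s₀ > 1. -/
def ConstsOK (s₀ b ρ : ℝ) : Prop :=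
  1 ≤ s₀ ∧ 1 ≤ b ∧ (s₀ = 1 → b = 1) ∧
  (1 < s₀ → (2 * s₀ - ρ) / (s₀ * (2 - ρ)) < b)

/-- Assumption 4: there is a monotone vector norm ‖·‖_• on ℝ^q such that
λ = sup_{‖x‖_•=1}(E[‖Λ₁x‖_•^{bs₀}])^{1/(bs₀)} < 1 (this tacitly requires
E[|ε₁|^{2bs₀}] < ∞). -/
def Assump4 (q : ℕ) (αc : ℕ → ℝ) (με : Measure ℝ) (b s₀ : ℝ)
    (Nb : (Fin q → ℝ) → ℝ) : Prop :=
  IsVectorNorm Nb ∧ IsMonotoneNorm Nb ∧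
  Integrable (fun e => |e| ^ (2 * b * s₀)) με ∧
  sSup {c : ℝ | ∃ x : Fin q → ℝ, Nb x = 1 ∧
    c = (∫ e, Nb ((lambdaMat q αc e).mulVec x) ^ (b * s₀) ∂με) ^ (1 / (b * s₀))} < 1

/-- The drift function
V(x) = 1 + |z₁(x₁)|^{2s₀} + s₁‖z₂(x₁)‖_*^{2s₀α} + s₂‖ξ(x)‖_•^{bs₀}
(the z₂ term vanishes automatically when p = 1). -/
def Vfun (p q : ℕ) (πc : ℕ → ℝ) (g : ℝ → ℝ) (s₁ s₂ s₀ b α : ℝ)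
    (Nstar : (Fin (p - 1) → ℝ) → ℝ) (Nb : (Fin q → ℝ) → ℝ)
    (x : Fin (p + q) → ℝ) : ℝ :=
  1 + |z1 p q πc x| ^ (2 * s₀) + s₁ * Nstar (z2 p q x) ^ (2 * s₀ * α)
    + s₂ * Nb (xiVec p q πc g x) ^ (b * s₀)

end

/-!
One step of the chain acts on the three parts of `V` in a triangular way.

* `ξ` is dominated by `Λ₁ξ + ωε²(1, 0, …, 0)`, so its `b s₀`-th moment contracts up to a constant.
* `z₂` becomes `Π₁z₂ + z₁(1, 0, …, 0)`, so `‖z₂‖_*^{2s₀α}` contracts up to a multiple of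
  `|z₁|^{2s₀α} = |z₁|^{2s₀-ρ}`.
* `z₁` becomes `g(z₁) + σε`. As `ε` has mean zero, expanding the `2s₀`-th power leaves no linear
  term: `E|g + σε|^{2s₀} ≤ |g|^{2s₀} + C(|g|^{2s₀-2}σ² + σ^{2s₀})`. The polynomial contraction of
  `g` yields a decrease `-r|z₁|^{2s₀-ρ}`, half of which absorbs `|g|^{2s₀-2}σ²` by Young's
  inequality at the cost of the power `(2s₀-ρ)/(2-ρ) ≤ b s₀` of `σ²`, which `‖ξ‖_•^{b s₀}` controls.

With a small weight on `z₂` and a large weight on `ξ` the three bounds add up to a decrease of order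
`|z₁|^{2s₀α} + ‖z₂‖_*^{2s₀α} + ‖ξ‖_•^{b s₀}`, which dominates `V^α` and exceeds any constant
off `A_N`.
-/

section RealPowers

lemma exists_one_add_mul_mem_Ico {l : ℝ} (hl : l ∈ Set.Ico (0 : ℝ) 1) :
    ∃ δ : ℝ, 0 < δ ∧ (1 + δ) * l ∈ Set.Ico (0 : ℝ) 1 := by
  obtain ⟨hl₀, hl₁⟩ := hl
  exact ⟨1 - l, sub_pos.2 hl₁, by nlinarith, by nlinarith⟩

lemma exists_add_rpow_le {κ δ : ℝ} (hκ : 0 < κ) (hδ : 0 < δ) :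
    ∃ C : ℝ, 0 ≤ C ∧ ∀ a y : ℝ, 0 ≤ a → 0 ≤ y →
      (a + y) ^ κ ≤ (1 + δ) * a ^ κ + C * y ^ κ := by
  obtain ⟨η, hη, hηκ⟩ : ∃ η : ℝ, 0 < η ∧ (1 + η) ^ κ = 1 + δ :=
    ⟨(1 + δ) ^ κ⁻¹ - 1, sub_pos.2 (Real.one_lt_rpow (by linarith) (inv_pos.2 hκ)), by
      rw [add_sub_cancel, Real.rpow_inv_rpow (by positivity) hκ.ne']⟩
  refine ⟨(η⁻¹ + 1) ^ κ, by positivity, fun a y ha hy => ?_⟩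
  rcases le_total y (η * a) with hya | hay
  · calc (a + y) ^ κ ≤ ((1 + η) * a) ^ κ :=
          Real.rpow_le_rpow (by positivity) (by linarith) hκ.le
      _ = (1 + δ) * a ^ κ := by rw [Real.mul_rpow (by positivity) ha, hηκ]
      _ ≤ _ := le_add_of_nonneg_right (by positivity)
  · have ha_le : a ≤ η⁻¹ * y := (le_inv_mul_iff₀ hη).2 hay
    calc (a + y) ^ κ ≤ ((η⁻¹ + 1) * y) ^ κ :=
          Real.rpow_le_rpow (by positivity) (by linarith) hκ.le
      _ = (η⁻¹ + 1) ^ κ * y ^ κ := Real.mul_rpow (by positivity) hy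
      _ ≤ _ := le_add_of_nonneg_left (by positivity)

lemma abs_one_add_rpow_le {m : ℝ} (hm : 1 ≤ m) (t : ℝ) :
    |1 + t| ^ m ≤ 1 + m * t + ((1 + m) ^ m + m ^ 2) * (t ^ 2 + |t| ^ m) := by
  have hmt : |m * t| = m * |t| := by rw [abs_mul, abs_of_pos (by linarith)]
  rcases le_total |m * t| 1 with hsmall | hlarge
  · have ht : |t| ≤ 1 := by nlinarith [abs_nonneg t]
    have h1t : 0 ≤ 1 + t := by linarith [(abs_le.1 ht).1]
    have hexp : |1 + t| ^ m ≤ Real.exp (m * t) := by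
      rw [abs_of_nonneg h1t, mul_comm, Real.exp_mul]
      exact Real.rpow_le_rpow h1t (by linarith [Real.add_one_le_exp t]) (by linarith)
    have hexp_le := (abs_le.1 (Real.abs_exp_sub_one_sub_id_le hsmall)).2
    have : 0 ≤ (1 + m) ^ m * (t ^ 2 + |t| ^ m) + m ^ 2 * |t| ^ m := by positivity
    linarith
  · have hbase : |1 + t| ≤ (1 + m) * |t| := by
      have := abs_add_le 1 t
      rw [abs_one] at this
      linarith
    have hpow : |1 + t| ^ m ≤ (1 + m) ^ m * |t| ^ m := by
      rw [← Real.mul_rpow (by positivity) (abs_nonneg _)]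
      exact Real.rpow_le_rpow (abs_nonneg _) hbase (by linarith)
    have hlin : -(m * t) ≤ (m * t) ^ 2 := by
      rw [← sq_abs]
      nlinarith [neg_abs_le (m * t)]
    have : 0 ≤ (1 + m) ^ m * t ^ 2 + m ^ 2 * |t| ^ m := by positivity
    linarith

lemma abs_add_rpow_le {m : ℝ} (hm : 1 ≤ m) (a h : ℝ) :
    |a + h| ^ m ≤ |a| ^ m + m * |a| ^ (m - 2) * a * h
      + ((1 + m) ^ m + m ^ 2) * (|a| ^ (m - 2) * h ^ 2 + |h| ^ m) := by
  rcases eq_or_ne a 0 with rfl | ha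
  · have hC : 1 ≤ (1 + m) ^ m + m ^ 2 := by
      have : 1 ≤ (1 + m) ^ m := Real.one_le_rpow (by linarith) (by linarith)
      nlinarith
    have hterm : |h| ^ m ≤ |(0 : ℝ)| ^ (m - 2) * h ^ 2 + |h| ^ m :=
      le_add_of_nonneg_left (by positivity)
    simp only [zero_add, mul_zero, zero_mul, add_zero, abs_zero,
      Real.zero_rpow (by linarith : m ≠ 0)] at hterm ⊢
    exact hterm.trans (le_mul_of_one_le_left (by positivity) hC)
  · have hscale : ∀ t, |a * t| ^ m = |a| ^ m * |t| ^ m := fun t => by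
      rw [abs_mul, Real.mul_rpow (abs_nonneg _) (abs_nonneg _)]
    have hsq : |a| ^ m = |a| ^ (m - 2) * a ^ 2 := by
      rw [← sq_abs a, ← Real.rpow_natCast |a| 2, ← Real.rpow_add (abs_pos.2 ha)]
      norm_num
    obtain ⟨t, rfl⟩ : ∃ t, h = a * t := ⟨h / a, by field_simp⟩
    calc |a + a * t| ^ m = |a| ^ m * |1 + t| ^ m := by rw [← hscale]; ring_nf
      _ ≤ |a| ^ m * (1 + m * t + ((1 + m) ^ m + m ^ 2) * (t ^ 2 + |t| ^ m)) :=
          mul_le_mul_of_nonneg_left (abs_one_add_rpow_le hm t) (by positivity)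
      _ = |a| ^ m + m * t * |a| ^ m
            + ((1 + m) ^ m + m ^ 2) * (|a| ^ m * t ^ 2 + |a| ^ m * |t| ^ m) := by ring
      _ = _ := by rw [hscale, hsq]; ring

lemma rpow_le_mul_one_add_rpow {ω c θ P S n : ℝ} (hω : 0 ≤ ω) (hc : 0 ≤ c) (hθ : 0 ≤ θ)
    (hθP : θ ≤ P) (hS : 0 ≤ S) (hn : 0 ≤ n) (hSn : S ≤ ω + c * n) :
    S ^ θ ≤ (1 + ω + c) ^ P * (1 + n ^ P) := by
  have hmax_one : 1 ≤ max 1 n := le_max_left 1 n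
  have hmax_n : n ≤ max 1 n := le_max_right 1 n
  have hSle : S ≤ (1 + ω + c) * max 1 n := by nlinarith
  calc S ^ θ ≤ ((1 + ω + c) * max 1 n) ^ θ := Real.rpow_le_rpow hS hSle hθ
    _ ≤ ((1 + ω + c) * max 1 n) ^ P :=
        Real.rpow_le_rpow_of_exponent_le (by nlinarith) hθP
    _ = (1 + ω + c) ^ P * (max 1 n) ^ P := Real.mul_rpow (by positivity) (by positivity)
    _ ≤ (1 + ω + c) ^ P * (1 + n ^ P) := by
        gcongr
        rcases max_cases 1 n with h | h
        · rw [h.1, Real.one_rpow]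
          exact le_add_of_nonneg_right (by positivity)
        · rw [h.1]
          exact le_add_of_nonneg_left zero_le_one

lemma rpow_mul_le_add_rpow {a b δ A S : ℝ} (ha : 0 ≤ a) (hb : 0 < b) (hδ : 0 < δ)
    (hA : 0 ≤ A) (hS : 0 ≤ S) :
    A ^ a * S ≤ δ * A ^ (a + b) + (δ⁻¹) ^ (a / b) * S ^ ((a + b) / b) := by
  rcases le_total S (δ * A ^ b) with hSA | hAS
  · calc A ^ a * S ≤ A ^ a * (δ * A ^ b) := by gcongr
      _ = δ * A ^ (a + b) := by rw [Real.rpow_add_of_nonneg hA ha hb.le]; ring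
      _ ≤ _ := le_add_of_nonneg_right (by positivity)
  · have hAb : A ^ b ≤ δ⁻¹ * S := (le_inv_mul_iff₀ hδ).2 hAS
    calc A ^ a * S = (A ^ b) ^ (a / b) * S := by
          rw [← Real.rpow_mul hA, mul_div_cancel₀ _ hb.ne']
      _ ≤ (δ⁻¹ * S) ^ (a / b) * S := by gcongr
      _ = (δ⁻¹) ^ (a / b) * S ^ ((a + b) / b) := by
          rw [add_div, div_self hb.ne', Real.rpow_add_of_nonneg hS (by positivity) zero_le_one,
            Real.rpow_one, Real.mul_rpow (by positivity) hS, mul_assoc]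
      _ ≤ _ := le_add_of_nonneg_left (by positivity)

lemma exists_mul_rpow_mul_add_rpow_le {s ρ P ω c C δ : ℝ} (hs : 1 ≤ s) (hρ : 0 ≤ ρ)
    (hρ₂ : ρ < 2) (hP : (2 * s - ρ) / (2 - ρ) ≤ P) (hω : 0 ≤ ω) (hc : 0 ≤ c) (hC : 0 < C)
    (hδ : 0 < δ) :
    ∃ D : ℝ, 0 ≤ D ∧ ∀ A S n : ℝ, 0 ≤ A → 0 ≤ S → 0 ≤ n → S ≤ ω + c * n →
      C * (A ^ (2 * s - 2) * S + S ^ s) ≤ δ * A ^ (2 * s - ρ) + D * (1 + n ^ P) := by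
  have hρ_sub : 0 < 2 - ρ := sub_pos.2 hρ₂
  have hsP : s ≤ P := ((le_div_iff₀ hρ_sub).2 (by nlinarith)).trans hP
  set D := ((δ / C)⁻¹) ^ ((2 * s - 2) / (2 - ρ))
  set B := (1 + ω + c) ^ P
  refine ⟨C * (D * B + B), by positivity, fun A S n hA hS hn hSn => ?_⟩
  have hyoung : A ^ (2 * s - 2) * S ≤
      δ / C * A ^ (2 * s - ρ) + D * S ^ ((2 * s - ρ) / (2 - ρ)) := by
    have := rpow_mul_le_add_rpow (by linarith : 0 ≤ 2 * s - 2) hρ_sub (div_pos hδ hC) hA hS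
    rwa [sub_add_sub_cancel] at this
  have hS_young : S ^ ((2 * s - ρ) / (2 - ρ)) ≤ B * (1 + n ^ P) :=
    rpow_le_mul_one_add_rpow hω hc (div_nonneg (by linarith) hρ_sub.le) hP hS hn hSn
  have hS_s : S ^ s ≤ B * (1 + n ^ P) :=
    rpow_le_mul_one_add_rpow hω hc (by linarith) hsP hS hn hSn
  calc C * (A ^ (2 * s - 2) * S + S ^ s)
      ≤ C * (δ / C * A ^ (2 * s - ρ) + D * (B * (1 + n ^ P)) + B * (1 + n ^ P)) := by
        gcongr
        exact hyoung.trans (by gcongr)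
    _ = δ * A ^ (2 * s - ρ) + C * (D * B + B) * (1 + n ^ P) := by
        field_simp
        ring

lemma sq_rpow (e P : ℝ) : (e ^ 2) ^ P = |e| ^ (2 * P) := by
  rw [Real.rpow_mul (abs_nonneg _), Real.rpow_two, sq_abs]

end RealPowers

section Moments

variable {Ω : Type*} [MeasurableSpace Ω] {μ : Measure Ω} {X : Ω → ℝ}

lemma integrable_abs_rpow_of_memLp {m : ℝ} (hm : 0 < m) (hX : MemLp X (ENNReal.ofReal m) μ) :
    Integrable (fun w => |X w| ^ m) μ := by
  simpa [ENNReal.toReal_ofReal hm.le] using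
    hX.integrable_norm_rpow (by simpa using hm) ENNReal.ofReal_ne_top

lemma memLp_of_integrable_abs_rpow {m : ℝ} (hm : 0 < m) (hX : AEStronglyMeasurable X μ)
    (h : Integrable (fun w => |X w| ^ m) μ) : MemLp X (ENNReal.ofReal m) μ := by
  rw [← integrable_norm_rpow_iff hX (by simpa using hm) ENNReal.ofReal_ne_top]
  simpa [ENNReal.toReal_ofReal hm.le] using h

lemma integrable_abs_add_mul_rpow [IsFiniteMeasure μ] {m : ℝ} (hm : 0 < m)
    (hX : MemLp X (ENNReal.ofReal m) μ) (a τ : ℝ) :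
    Integrable (fun w => |a + τ * X w| ^ m) μ :=
  integrable_abs_rpow_of_memLp hm ((memLp_const a).add (hX.const_mul τ))

lemma integrable_one_add_sq_rpow [IsFiniteMeasure μ] {P : ℝ} (hP : 0 < P)
    (hX : MemLp X (ENNReal.ofReal (2 * P)) μ) : Integrable (fun w => (1 + X w ^ 2) ^ P) μ := by
  obtain ⟨C, -, hC⟩ := exists_add_rpow_le hP one_pos
  have hX_meas : AEStronglyMeasurable (fun w => (1 + X w ^ 2) ^ P) μ :=
    (((hX.aestronglyMeasurable.aemeasurable.pow_const 2).const_add 1).pow_const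
      P).aestronglyMeasurable
  refine ((integrable_const ((1 + 1) * 1 ^ P)).add
    ((integrable_abs_rpow_of_memLp (by positivity) hX).const_mul C)).mono' hX_meas
    (Eventually.of_forall fun w => ?_)
  rw [Real.norm_of_nonneg (by positivity)]
  simpa [sq_rpow] using hC 1 (X w ^ 2) zero_le_one (sq_nonneg _)

/-- The mean being zero kills the first-order term of the expansion of `|a + h| ^ m`. -/
lemma exists_integral_abs_add_mul_rpow_le [IsProbabilityMeasure μ] {m : ℝ} (hm : 2 ≤ m)
    (hX : MemLp X (ENNReal.ofReal m) μ) (hmean : ∫ w, X w ∂μ = 0) :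
    ∃ C : ℝ, 0 < C ∧ ∀ a τ : ℝ,
      ∫ w, |a + τ * X w| ^ m ∂μ ≤ |a| ^ m + C * (|a| ^ (m - 2) * τ ^ 2 + |τ| ^ m) := by
  have hX1 : Integrable X μ := hX.integrable (by simpa using (by linarith : (1 : ℝ) ≤ m))
  have hX2 : Integrable (fun w => X w ^ 2) μ :=
    (hX.mono_exponent (by simpa using ENNReal.ofReal_le_ofReal hm)).integrable_sq
  have hXm := integrable_abs_rpow_of_memLp (by linarith) hX
  set K := (1 + m) ^ m + m ^ 2
  set M₂ := ∫ w, X w ^ 2 ∂μ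
  set Mm := ∫ w, |X w| ^ m ∂μ
  have : 0 < K := by positivity
  have hM₂ : 0 ≤ M₂ := integral_nonneg fun _ => sq_nonneg _
  have hMm : 0 ≤ Mm := integral_nonneg fun _ => by positivity
  refine ⟨K * (1 + M₂ + Mm), by positivity, fun a τ => ?_⟩
  have hlin : Integrable (fun w => |a| ^ m + m * |a| ^ (m - 2) * a * τ * X w) μ :=
    (integrable_const _).add (hX1.const_mul _)
  have hrem : Integrable
      (fun w => K * (|a| ^ (m - 2) * τ ^ 2) * X w ^ 2 + K * |τ| ^ m * |X w| ^ m) μ :=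
    (hX2.const_mul _).add (hXm.const_mul _)
  calc ∫ w, |a + τ * X w| ^ m ∂μ
      ≤ ∫ w, (|a| ^ m + m * |a| ^ (m - 2) * a * τ * X w)
          + (K * (|a| ^ (m - 2) * τ ^ 2) * X w ^ 2 + K * |τ| ^ m * |X w| ^ m) ∂μ := by
        refine integral_mono (integrable_abs_add_mul_rpow (by linarith) hX a τ)
          (hlin.add hrem) fun w => ?_
        refine (abs_add_rpow_le (by linarith) a (τ * X w)).trans_eq ?_
        rw [abs_mul, Real.mul_rpow (abs_nonneg _) (abs_nonneg _)]
        ring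
    _ = |a| ^ m + K * (|a| ^ (m - 2) * τ ^ 2 * M₂ + |τ| ^ m * Mm) := by
        rw [integral_add hlin hrem, integral_add (integrable_const _) (hX1.const_mul _),
          integral_add (hX2.const_mul _) (hXm.const_mul _), integral_const_mul,
          integral_const_mul, integral_const_mul, hmean, integral_const, probReal_univ]
        simp only [one_smul, mul_zero, add_zero]
        ring
    _ ≤ |a| ^ m + K * (|a| ^ (m - 2) * τ ^ 2 * (1 + M₂ + Mm) + |τ| ^ m * (1 + M₂ + Mm)) := by
        gcongr <;> linarith
    _ = _ := by ring

end Moments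

section VectorNorms

namespace IsVectorNorm

variable {d : ℕ} {N : (Fin d → ℝ) → ℝ}

lemma nonneg (hN : IsVectorNorm N) (x : Fin d → ℝ) : 0 ≤ N x := hN.1 x

lemma eq_zero_iff (hN : IsVectorNorm N) {x : Fin d → ℝ} : N x = 0 ↔ x = 0 := hN.2.1 x

lemma map_smul (hN : IsVectorNorm N) (c : ℝ) (x : Fin d → ℝ) : N (c • x) = |c| * N x :=
  hN.2.2.1 c x

lemma add_le (hN : IsVectorNorm N) (x y : Fin d → ℝ) : N (x + y) ≤ N x + N y := hN.2.2.2 x y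

/-- A vector norm as a bundled `Seminorm`, which gives access to the convexity and continuity
theory of seminorms. -/
noncomputable def toSeminorm (hN : IsVectorNorm N) : Seminorm ℝ (Fin d → ℝ) :=
  Seminorm.of N hN.add_le hN.map_smul

lemma continuous (hN : IsVectorNorm N) : Continuous N :=
  hN.toSeminorm.convexOn.locallyLipschitz.continuous

lemma exists_norm_le (hN : IsVectorNorm N) : ∃ c : ℝ, 0 ≤ c ∧ ∀ x, ‖x‖ ≤ c * N x := by
  rcases subsingleton_or_nontrivial (Fin d → ℝ) with _ | _
  · exact ⟨0, le_rfl, fun x => by simp [Subsingleton.elim x 0]⟩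
  obtain ⟨u, hu, hmin⟩ := (isCompact_sphere (0 : Fin d → ℝ) 1).exists_isMinOn
    (NormedSpace.sphere_nonempty.2 zero_le_one) hN.continuous.continuousOn
  have hNu : 0 < N u := (hN.nonneg u).lt_of_ne' fun h => by
    simp [hN.eq_zero_iff.1 h] at hu
  refine ⟨(N u)⁻¹, by positivity, fun x => ?_⟩
  rcases eq_or_ne x 0 with rfl | hx
  · simpa using mul_nonneg (inv_nonneg.2 hNu.le) (hN.nonneg 0)
  have hle : N u ≤ ‖x‖⁻¹ * N x := by
    have hmem : ‖x‖⁻¹ • x ∈ Metric.sphere (0 : Fin d → ℝ) 1 := by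
      simpa using norm_smul_inv_norm (𝕜 := ℝ) hx
    simpa [hN.map_smul] using hmin hmem
  rw [le_inv_mul_iff₀ hNu, mul_comm]
  exact (le_inv_mul_iff₀ (norm_pos_iff.2 hx)).1 hle

lemma exists_seminorm_le (hN : IsVectorNorm N) (f : Seminorm ℝ (Fin d → ℝ)) :
    ∃ C : ℝ, 0 ≤ C ∧ ∀ x, f x ≤ C * N x := by
  obtain ⟨B, hB, hfB⟩ :=
    Seminorm.bound_of_continuous_normedSpace f f.convexOn.locallyLipschitz.continuous
  obtain ⟨c, hc, hcN⟩ := hN.exists_norm_le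
  refine ⟨B * c, by positivity, fun x => (hfB x).trans ?_⟩
  rw [mul_assoc]
  exact mul_le_mul_of_nonneg_left (hcN x) hB.le

lemma exists_mulVec_le (hN : IsVectorNorm N) (A : Matrix (Fin d) (Fin d) ℝ) :
    ∃ C : ℝ, 0 ≤ C ∧ ∀ x, N (A.mulVec x) ≤ C * N x :=
  hN.exists_seminorm_le (hN.toSeminorm.comp A.mulVecLin)

lemma exists_abs_dotProduct_le (hN : IsVectorNorm N) (a : Fin d → ℝ) :
    ∃ C : ℝ, 0 ≤ C ∧ ∀ x, |a ⬝ᵥ x| ≤ C * N x :=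
  hN.exists_seminorm_le ((normSeminorm ℝ ℝ).comp (dotProductBilin ℝ ℝ a))

lemma exists_le_mul_of_sSup_lt_one (hN : IsVectorNorm N) {F : (Fin d → ℝ) → ℝ} {C : ℝ}
    (hF : ∀ (c : ℝ) x, F (c • x) = |c| * F x) (hFC : ∀ x, F x ≤ C * N x)
    (hsup : sSup {c : ℝ | ∃ x, N x = 1 ∧ c = F x} < 1) :
    ∃ l ∈ Set.Ico (0 : ℝ) 1, ∀ x, F x ≤ l * N x := by
  refine ⟨max 0 (sSup {c : ℝ | ∃ x, N x = 1 ∧ c = F x}),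
    ⟨le_max_left _ _, max_lt one_pos hsup⟩, fun x => ?_⟩
  rcases eq_or_ne (N x) 0 with hx | hx
  · simpa [hx] using hFC x
  have hNx : 0 < N x := (hN.nonneg x).lt_of_ne' hx
  have hbdd : BddAbove {c : ℝ | ∃ x, N x = 1 ∧ c = F x} :=
    ⟨C, by rintro _ ⟨y, hy, rfl⟩; simpa [hy] using hFC y⟩
  have hunit : N ((N x)⁻¹ • x) = 1 := by
    rw [hN.map_smul, abs_of_pos (inv_pos.2 hNx), inv_mul_cancel₀ hx]
  have hle : (N x)⁻¹ * F x ≤ sSup {c : ℝ | ∃ x, N x = 1 ∧ c = F x} := by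
    rw [← abs_of_pos (inv_pos.2 hNx), ← hF]
    exact le_csSup hbdd ⟨_, hunit, rfl⟩
  rw [mul_comm]
  exact (inv_mul_le_iff₀ hNx).1 (hle.trans (le_max_right _ _))

lemma exists_mulVec_le_of_inducedMatNorm_lt_one (hN : IsVectorNorm N)
    {A : Matrix (Fin d) (Fin d) ℝ} (hA : inducedMatNorm N A < 1) :
    ∃ l ∈ Set.Ico (0 : ℝ) 1, ∀ x, N (A.mulVec x) ≤ l * N x := by
  obtain ⟨C, -, hC⟩ := hN.exists_mulVec_le A
  exact hN.exists_le_mul_of_sSup_lt_one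
    (fun c x => by rw [Matrix.mulVec_smul, hN.map_smul]) hC hA

lemma add_sq_smul_le (hN : IsVectorNorm N) (u v : Fin d → ℝ) (e : ℝ) :
    N (u + e ^ 2 • v) ≤ (N u + N v) * (1 + e ^ 2) := by
  have hadd := hN.add_le u (e ^ 2 • v)
  rw [hN.map_smul, abs_of_nonneg (sq_nonneg e)] at hadd
  nlinarith [mul_nonneg (hN.nonneg u) (sq_nonneg e), hN.nonneg v]

lemma add_sq_smul_rpow_le (hN : IsVectorNorm N) {P : ℝ} (hP : 0 ≤ P) (u v : Fin d → ℝ) (e : ℝ) :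
    N (u + e ^ 2 • v) ^ P ≤ (N u + N v) ^ P * (1 + e ^ 2) ^ P := by
  rw [← Real.mul_rpow (add_nonneg (hN.nonneg u) (hN.nonneg v)) (by positivity)]
  exact Real.rpow_le_rpow (hN.nonneg _) (hN.add_sq_smul_le u v e) hP

lemma integrable_add_sq_smul_rpow (hN : IsVectorNorm N) {P : ℝ} (hP : 0 ≤ P) {μ : Measure ℝ}
    (hμ : Integrable (fun e => (1 + e ^ 2) ^ P) μ) (u v : Fin d → ℝ) :
    Integrable (fun e => N (u + e ^ 2 • v) ^ P) μ := by
  have hcont : Continuous fun e : ℝ => N (u + e ^ 2 • v) ^ P :=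
    (hN.continuous.comp (by fun_prop)).rpow_const fun _ => Or.inr hP
  refine (hμ.const_mul ((N u + N v) ^ P)).mono' hcont.aestronglyMeasurable
    (Eventually.of_forall fun e => ?_)
  rw [Real.norm_of_nonneg (Real.rpow_nonneg (hN.nonneg _) _)]
  exact hN.add_sq_smul_rpow_le hP u v e

end IsVectorNorm

end VectorNorms

section CompanionMatrices

variable {d : ℕ}

/-- The companion matrix with first row `c` and ones on the subdiagonal; both `Π₁` and `Λ_t`
are of this form. -/
def companionMat (c : Fin d → ℝ) : Matrix (Fin d) (Fin d) ℝ :=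
  Matrix.of fun i j => if (i : ℕ) = 0 then c j else if (i : ℕ) = (j : ℕ) + 1 then 1 else 0

/-- The first standard basis vector of `ℝ^d`, which is the zero vector when `d = 0`. -/
def firstBasisVec (d : ℕ) : Fin d → ℝ := fun i => if (i : ℕ) = 0 then 1 else 0

/-- The vector `(c₁, …, c_d)` of the first `d` terms of a sequence of lag coefficients, which
are numbered from `1`. -/
def lagCoeffs (d : ℕ) (c : ℕ → ℝ) : Fin d → ℝ := fun j => c ((j : ℕ) + 1)

lemma coordVal_of_lt (v : Fin d → ℝ) {i : ℕ} (hi : i < d) : coordVal v i = v ⟨i, hi⟩ :=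
  dif_pos hi

lemma companionMat_zero_mulVec_apply (v : Fin d → ℝ) (i : Fin d) :
    (companionMat 0).mulVec v i = if (i : ℕ) = 0 then 0 else coordVal v ((i : ℕ) - 1) := by
  rcases eq_or_ne (i : ℕ) 0 with hi | hi
  · simp [Matrix.mulVec, dotProduct, companionMat, hi]
  · have hlt : (i : ℕ) - 1 < d := by omega
    have hrow : ∀ j : Fin d, (i : ℕ) = (j : ℕ) + 1 ↔ j = ⟨(i : ℕ) - 1, hlt⟩ := fun j => by
      simp only [Fin.ext_iff]
      omega
    simp [Matrix.mulVec, dotProduct, companionMat, hi, hrow, coordVal_of_lt v hlt]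

lemma companionMat_mulVec (c v : Fin d → ℝ) :
    (companionMat c).mulVec v = (companionMat 0).mulVec v + (c ⬝ᵥ v) • firstBasisVec d := by
  ext i
  by_cases hi : (i : ℕ) = 0 <;>
    simp [Matrix.mulVec, dotProduct, companionMat, firstBasisVec, hi]

lemma sum_lagCoeffs_mul (c f : ℕ → ℝ) :
    ∑ j : Fin d, lagCoeffs d c j * f j = ∑ i ∈ Finset.Icc 1 d, c i * f (i - 1) := by
  simp only [lagCoeffs]
  rw [Fin.sum_univ_eq_sum_range (fun j => c (j + 1) * f j), Finset.range_eq_Ico,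
    ← Finset.Ico_add_one_right_eq_Icc, ← Finset.sum_Ico_add' (fun i => c i * f (i - 1)) 0 d 1]
  simp only [Nat.add_sub_cancel]

lemma piMatOne_mulVec (p : ℕ) (πc : ℕ → ℝ) (v : Fin (p - 1) → ℝ) :
    (piMatOne p πc).mulVec v =
      (companionMat 0).mulVec v + (lagCoeffs (p - 1) πc ⬝ᵥ v) • firstBasisVec (p - 1) :=
  companionMat_mulVec (lagCoeffs (p - 1) πc) v

lemma lambdaMat_mulVec (q : ℕ) (αc : ℕ → ℝ) (e : ℝ) (v : Fin q → ℝ) :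
    (lambdaMat q αc e).mulVec v =
      (companionMat 0).mulVec v + e ^ 2 • (lagCoeffs q αc ⬝ᵥ v) • firstBasisVec q := by
  have hΛ : lambdaMat q αc e = companionMat (e ^ 2 • lagCoeffs q αc) := by
    ext i j
    simp [lambdaMat, companionMat, lagCoeffs, mul_comm]
  rw [hΛ, companionMat_mulVec, smul_dotProduct, smul_assoc]

end CompanionMatrices

section OneStep

variable {p q : ℕ} {πc : ℕ → ℝ} {g : ℝ → ℝ} {ω : ℝ} {αc : ℕ → ℝ}
  {ζ : ℕ → (Fin (p + q) → ℝ) → ℝ}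

lemma coordVal_oneStep_zero (hpq : 0 < p + q) (x : Fin (p + q) → ℝ) (e : ℝ) :
    coordVal (oneStep p q πc g ω αc ζ x e) 0 =
      ∑ k ∈ Finset.Icc 1 (p - 1), πc k * coordVal x (k - 1) + g (z1 p q πc x)
        + √(sigma2 p q πc g ω αc ζ x) * e := by
  rw [coordVal_of_lt _ hpq]
  exact if_pos rfl

lemma coordVal_oneStep_succ {i : ℕ} (hi : i + 1 < p + q) (x : Fin (p + q) → ℝ) (e : ℝ) :
    coordVal (oneStep p q πc g ω αc ζ x e) (i + 1) = coordVal x i := by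
  rw [coordVal_of_lt _ hi]
  exact if_neg i.succ_ne_zero

lemma uLag_oneStep_succ (hp : 1 ≤ p) {j : ℕ} (hj : j < q) (x : Fin (p + q) → ℝ) (e : ℝ) :
    uLag p q πc (oneStep p q πc g ω αc ζ x e) (j + 1) = uLag p q πc x j := by
  unfold uLag
  rw [coordVal_oneStep_succ (by omega)]
  congr 1
  refine Finset.sum_congr rfl fun i hi => ?_
  rw [Finset.mem_Icc] at hi
  rw [add_right_comm, coordVal_oneStep_succ (by omega)]

lemma z1_oneStep (hp : 1 ≤ p) (x : Fin (p + q) → ℝ) (e : ℝ) :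
    z1 p q πc (oneStep p q πc g ω αc ζ x e) =
      g (z1 p q πc x) + √(sigma2 p q πc g ω αc ζ x) * e := by
  have hsum : ∑ i ∈ Finset.Icc 1 (p - 1), πc i * coordVal (oneStep p q πc g ω αc ζ x e) (0 + i)
      = ∑ k ∈ Finset.Icc 1 (p - 1), πc k * coordVal x (k - 1) := by
    refine Finset.sum_congr rfl fun i hi => ?_
    rw [Finset.mem_Icc] at hi
    obtain ⟨k, rfl⟩ := Nat.exists_eq_add_of_le' hi.1
    rw [zero_add, coordVal_oneStep_succ (by omega), Nat.add_sub_cancel]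
  rw [z1, uLag, hsum, coordVal_oneStep_zero (by omega)]
  ring

lemma z2_oneStep (x : Fin (p + q) → ℝ) (e : ℝ) :
    z2 p q (oneStep p q πc g ω αc ζ x e) =
      (piMatOne p πc).mulVec (z2 p q x) + z1 p q πc x • firstBasisVec (p - 1) := by
  ext i
  have hshift : z2 p q (oneStep p q πc g ω αc ζ x e) i = coordVal x i :=
    coordVal_oneStep_succ (by omega) x e
  rw [hshift, piMatOne_mulVec]
  simp only [Pi.add_apply, Pi.smul_apply, smul_eq_mul, companionMat_zero_mulVec_apply,
    firstBasisVec]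
  by_cases hi : (i : ℕ) = 0
  · have hdot : lagCoeffs (p - 1) πc ⬝ᵥ z2 p q x =
        ∑ k ∈ Finset.Icc 1 (p - 1), πc k * coordVal x k := by
      refine (sum_lagCoeffs_mul πc fun k => coordVal x (k + 1)).trans
        (Finset.sum_congr rfl fun k hk => ?_)
      rw [Nat.sub_add_cancel (Finset.mem_Icc.1 hk).1]
    simp [hi, hdot, z1, uLag]
  · rw [if_neg hi, if_neg hi, coordVal_of_lt (z2 p q x) (by omega), z2,
      Nat.sub_add_cancel (Nat.pos_of_ne_zero hi)]
    ring

lemma eLag_oneStep_zero (hp : 1 ≤ p) (hq : 1 ≤ q) (x : Fin (p + q) → ℝ) (e : ℝ) :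
    eLag p q πc g (oneStep p q πc g ω αc ζ x e) 0 = √(sigma2 p q πc g ω αc ζ x) * e := by
  rw [eLag, ← z1, z1_oneStep hp, uLag_oneStep_succ hp hq, ← z1, add_sub_cancel_left]

lemma eLag_oneStep_succ (hp : 1 ≤ p) {j : ℕ} (hj : j + 1 < q) (x : Fin (p + q) → ℝ) (e : ℝ) :
    eLag p q πc g (oneStep p q πc g ω αc ζ x e) (j + 1) = eLag p q πc g x j := by
  rw [eLag, eLag, uLag_oneStep_succ hp (by omega), uLag_oneStep_succ hp hj]

/-- The part of Assumption 3 that controls the size of the volatility: nonnegative coefficients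
`ω, α₁, …, α_q` and weights `ζ₀, …, ζ_q` with values in `[0, 1]`. -/
structure IsVolatilitySpec (p q : ℕ) (ω : ℝ) (αc : ℕ → ℝ)
    (ζ : ℕ → (Fin (p + q) → ℝ) → ℝ) : Prop where
  intercept_nonneg : 0 ≤ ω
  coeff_nonneg : ∀ i, 1 ≤ i → i ≤ q → 0 ≤ αc i
  weight_nonneg : ∀ i ≤ q, ∀ x, 0 ≤ ζ i x
  weight_le_one : ∀ i ≤ q, ∀ x, ζ i x ≤ 1

lemma Assump3.isVolatilitySpec (h : Assump3 p q ω αc ζ) : IsVolatilitySpec p q ω αc ζ where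
  intercept_nonneg := h.1.le
  coeff_nonneg := h.2.1
  weight_nonneg i hi x := (h.2.2.2 i hi x).1.le
  weight_le_one i hi x := (h.2.2.2 i hi x).2

lemma sigma2_nonneg (h : IsVolatilitySpec p q ω αc ζ) (x : Fin (p + q) → ℝ) :
    0 ≤ sigma2 p q πc g ω αc ζ x := by
  refine add_nonneg (mul_nonneg (h.weight_nonneg 0 q.zero_le x) h.intercept_nonneg)
    (Finset.sum_nonneg fun i hi => ?_)
  rw [Finset.mem_Icc] at hi
  exact mul_nonneg (mul_nonneg (h.coeff_nonneg i hi.1 hi.2) (h.weight_nonneg i hi.2 x))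
    (sq_nonneg _)

lemma sigma2_le (h : IsVolatilitySpec p q ω αc ζ) (x : Fin (p + q) → ℝ) :
    sigma2 p q πc g ω αc ζ x ≤ ω + lagCoeffs q αc ⬝ᵥ xiVec p q πc g x := by
  have hdot : lagCoeffs q αc ⬝ᵥ xiVec p q πc g x =
      ∑ i ∈ Finset.Icc 1 q, αc i * eLag p q πc g x (i - 1) ^ 2 :=
    sum_lagCoeffs_mul αc fun i => eLag p q πc g x i ^ 2
  rw [hdot]
  refine add_le_add
    (mul_le_of_le_one_left h.intercept_nonneg (h.weight_le_one 0 q.zero_le x))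
    (Finset.sum_le_sum fun i hi => mul_le_mul_of_nonneg_right ?_ (sq_nonneg _))
  rw [Finset.mem_Icc] at hi
  exact mul_le_of_le_one_right (h.coeff_nonneg i hi.1 hi.2) (h.weight_le_one i hi.2 x)

lemma exists_sigma2_le_add_mul (h : IsVolatilitySpec p q ω αc ζ) {Nb : (Fin q → ℝ) → ℝ}
    (hNb : IsVectorNorm Nb) :
    ∃ c : ℝ, 0 ≤ c ∧ ∀ x, sigma2 p q πc g ω αc ζ x ≤ ω + c * Nb (xiVec p q πc g x) := by
  obtain ⟨c, hc, hcN⟩ := hNb.exists_abs_dotProduct_le (lagCoeffs q αc)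
  exact ⟨c, hc, fun x => (sigma2_le h x).trans (by gcongr; exact (le_abs_self _).trans (hcN _))⟩

lemma xiVec_oneStep (hp : 1 ≤ p) (h : IsVolatilitySpec p q ω αc ζ)
    (x : Fin (p + q) → ℝ) (e : ℝ) :
    xiVec p q πc g (oneStep p q πc g ω αc ζ x e) =
      (companionMat 0).mulVec (xiVec p q πc g x)
        + e ^ 2 • sigma2 p q πc g ω αc ζ x • firstBasisVec q := by
  ext i
  simp only [Pi.add_apply, Pi.smul_apply, smul_eq_mul, companionMat_zero_mulVec_apply,
    firstBasisVec]
  by_cases hi : (i : ℕ) = 0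
  · rw [xiVec, hi, eLag_oneStep_zero hp (by omega), mul_pow, Real.sq_sqrt (sigma2_nonneg h x)]
    simp [mul_comm]
  · obtain ⟨j, hj⟩ := Nat.exists_eq_add_one_of_ne_zero hi
    rw [xiVec, hj, eLag_oneStep_succ hp (by omega), Nat.add_sub_cancel,
      coordVal_of_lt _ (by omega), xiVec]
    simp

lemma xiVec_oneStep_norm_le (hp : 1 ≤ p) (h : IsVolatilitySpec p q ω αc ζ)
    {Nb : (Fin q → ℝ) → ℝ} (hNb : IsVectorNorm Nb) (hmono : IsMonotoneNorm Nb)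
    (x : Fin (p + q) → ℝ) (e : ℝ) :
    Nb (xiVec p q πc g (oneStep p q πc g ω αc ζ x e)) ≤
      Nb ((lambdaMat q αc e).mulVec (xiVec p q πc g x)) + ω * e ^ 2 * Nb (firstBasisVec q) := by
  have hcoord : ∀ i, xiVec p q πc g (oneStep p q πc g ω αc ζ x e) i ≤
      ((lambdaMat q αc e).mulVec (xiVec p q πc g x) + (ω * e ^ 2) • firstBasisVec q) i := by
    intro i
    have hfirst : 0 ≤ firstBasisVec q i := by unfold firstBasisVec; positivity
    have hσ := mul_le_mul_of_nonneg_left (sigma2_le (πc := πc) (g := g) h x)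
      (mul_nonneg (sq_nonneg e) hfirst)
    simp only [xiVec_oneStep hp h, lambdaMat_mulVec, Pi.add_apply, Pi.smul_apply, smul_eq_mul]
    linarith
  calc Nb (xiVec p q πc g (oneStep p q πc g ω αc ζ x e))
      ≤ Nb ((lambdaMat q αc e).mulVec (xiVec p q πc g x) + (ω * e ^ 2) • firstBasisVec q) :=
        hmono _ _ fun i => abs_le_abs_of_nonneg (sq_nonneg _) (hcoord i)
    _ ≤ Nb ((lambdaMat q αc e).mulVec (xiVec p q πc g x)) + Nb ((ω * e ^ 2) • firstBasisVec q) :=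
        hNb.add_le _ _
    _ = _ := by rw [hNb.map_smul, abs_of_nonneg (mul_nonneg h.intercept_nonneg (sq_nonneg e))]

end OneStep

section PolynomialContraction

variable {g : ℝ → ℝ} {r M₀ K₀ ρ : ℝ}

/-- The growth part of Assumption 2(ii): outside a compact set `g` is dominated by the identity
with the polynomially small relative gain `r * |u| ^ (-ρ)`, and it is bounded by `K₀` inside. -/
structure IsPolynomialContraction (g : ℝ → ℝ) (r M₀ K₀ ρ : ℝ) : Prop where
  rate_pos : 0 < r
  radius_pos : 0 < M₀
  order_pos : 0 < ρ
  order_lt_two : ρ < 2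
  abs_le_of_le_abs : ∀ u, M₀ ≤ |u| → |g u| ≤ (1 - r * |u| ^ (-ρ)) * |u|
  abs_le_of_abs_le : ∀ u, |u| ≤ M₀ → |g u| ≤ K₀

lemma Assump2ii.isPolynomialContraction (h : Assump2ii g r M₀ K₀ ρ) :
    IsPolynomialContraction g r M₀ K₀ ρ := by
  obtain ⟨-, -, -, hr, hM₀, -, hρ, hρ₂, hlarge, hsmall⟩ := h
  exact ⟨hr, hM₀, hρ, hρ₂, hlarge, hsmall⟩

namespace IsPolynomialContraction

lemma bound_nonneg (h : IsPolynomialContraction g r M₀ K₀ ρ) : 0 ≤ K₀ :=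
  (abs_nonneg (g 0)).trans (h.abs_le_of_abs_le 0 (by simpa using h.radius_pos.le))

lemma abs_rpow_le (h : IsPolynomialContraction g r M₀ K₀ ρ) {κ : ℝ} (hκ : 0 ≤ κ) (u : ℝ) :
    |g u| ^ κ ≤ |u| ^ κ + K₀ ^ κ := by
  have hK₀ := h.bound_nonneg
  have hr := h.rate_pos
  rcases le_total M₀ |u| with hu | hu
  · have hgu : |g u| ≤ |u| := (h.abs_le_of_le_abs u hu).trans
      (mul_le_of_le_one_left (abs_nonneg u) (sub_le_self _ (by positivity)))
    exact (Real.rpow_le_rpow (abs_nonneg _) hgu hκ).trans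
      (le_add_of_nonneg_right (by positivity))
  · exact (Real.rpow_le_rpow (abs_nonneg _) (h.abs_le_of_abs_le u hu) hκ).trans
      (le_add_of_nonneg_left (by positivity))

lemma abs_rpow_le_sub (h : IsPolynomialContraction g r M₀ K₀ ρ) {m : ℝ} (hm : 1 ≤ m)
    (hρm : ρ ≤ m) (u : ℝ) :
    |g u| ^ m ≤ |u| ^ m - r * |u| ^ (m - ρ) + (K₀ ^ m + r * M₀ ^ (m - ρ)) := by
  have hK₀ := h.bound_nonneg
  have hr := h.rate_pos
  have hM₀ := h.radius_pos
  rcases le_total M₀ |u| with hu | hu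
  · have hu_pos : 0 < |u| := hM₀.trans_le hu
    set t := 1 - r * |u| ^ (-ρ) with ht
    have hgu : |g u| ≤ t * |u| := h.abs_le_of_le_abs u hu
    have ht₀ : 0 ≤ t := nonneg_of_mul_nonneg_left ((abs_nonneg _).trans hgu) hu_pos
    have ht₁ : t ≤ 1 := sub_le_self _ (by positivity)
    calc |g u| ^ m ≤ (t * |u|) ^ m := Real.rpow_le_rpow (abs_nonneg _) hgu (by linarith)
      _ = t ^ m * |u| ^ m := Real.mul_rpow ht₀ (abs_nonneg _)
      _ ≤ t * |u| ^ m := by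
          gcongr
          exact Real.rpow_le_self_of_le_one ht₀ ht₁ hm
      _ = |u| ^ m - r * |u| ^ (m - ρ) := by
          rw [sub_eq_add_neg m ρ, Real.rpow_add hu_pos, ht]
          ring
      _ ≤ _ := le_add_of_nonneg_right (by positivity)
  · have hgu : |g u| ^ m ≤ K₀ ^ m :=
      Real.rpow_le_rpow (abs_nonneg _) (h.abs_le_of_abs_le u hu) (by linarith)
    have hru : r * |u| ^ (m - ρ) ≤ r * M₀ ^ (m - ρ) := by
      gcongr
    have : 0 ≤ |u| ^ m := by positivity
    linarith

/-- Half of the gain `r * |z| ^ (2s - ρ)` absorbs the second-order term of the moment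
expansion, at the price of a power of the volatility. -/
lemma exists_integral_abs_add_sqrt_mul_rpow_le (h : IsPolynomialContraction g r M₀ K₀ ρ)
    {Ω : Type*} [MeasurableSpace Ω] {μ : Measure Ω} [IsProbabilityMeasure μ] {X : Ω → ℝ}
    {s P ω c : ℝ} (hs : 1 ≤ s) (hP : (2 * s - ρ) / (2 - ρ) ≤ P) (hω : 0 ≤ ω) (hc : 0 ≤ c)
    (hX : MemLp X (ENNReal.ofReal (2 * s)) μ) (hmean : ∫ w, X w ∂μ = 0) :
    ∃ C : ℝ, 0 ≤ C ∧ ∀ z S n : ℝ, 0 ≤ S → 0 ≤ n → S ≤ ω + c * n →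
      ∫ w, |g z + √S * X w| ^ (2 * s) ∂μ ≤
        |z| ^ (2 * s) - r / 2 * |z| ^ (2 * s - ρ) + C * (1 + n ^ P) := by
  have hr := h.rate_pos
  have hM₀ := h.radius_pos
  have hK₀ := h.bound_nonneg
  have hρ := h.order_pos
  have hρ₂ := h.order_lt_two
  obtain ⟨C, hC, hmoment⟩ := exists_integral_abs_add_mul_rpow_le (by linarith) hX hmean
  obtain ⟨D, hD, habsorb⟩ :=
    exists_mul_rpow_mul_add_rpow_le hs hρ.le hρ₂ hP hω hc hC (half_pos hr)
  set R := K₀ ^ (2 * s) + r * M₀ ^ (2 * s - ρ) + r / 2 * K₀ ^ (2 * s - ρ) with hR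
  refine ⟨R + D, by positivity, fun z S n hS hn hSn => ?_⟩
  have hgz := mul_le_mul_of_nonneg_left (h.abs_rpow_le (by linarith : 0 ≤ 2 * s - ρ) z)
    (half_pos hr).le
  have hgz_sub := h.abs_rpow_le_sub (by linarith : 1 ≤ 2 * s) (by linarith) z
  have hRn : R ≤ R * (1 + n ^ P) :=
    le_mul_of_one_le_right (by positivity) (le_add_of_nonneg_right (by positivity))
  calc ∫ w, |g z + √S * X w| ^ (2 * s) ∂μ
      ≤ |g z| ^ (2 * s) + C * (|g z| ^ (2 * s - 2) * S + S ^ s) := by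
        simpa only [← sq_rpow √S, Real.sq_sqrt hS] using hmoment (g z) √S
    _ ≤ |g z| ^ (2 * s) + (r / 2 * |g z| ^ (2 * s - ρ) + D * (1 + n ^ P)) := by
        gcongr
        exact habsorb _ S n (abs_nonneg _) hS hn hSn
    _ ≤ |z| ^ (2 * s) - r / 2 * |z| ^ (2 * s - ρ) + R + D * (1 + n ^ P) := by linarith
    _ ≤ |z| ^ (2 * s) - r / 2 * |z| ^ (2 * s - ρ) + (R + D) * (1 + n ^ P) := by linarith

end IsPolynomialContraction

end PolynomialContraction

section ComponentDrifts

variable {p q : ℕ} {πc : ℕ → ℝ} {g : ℝ → ℝ} {ω : ℝ} {αc : ℕ → ℝ}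
  {ζ : ℕ → (Fin (p + q) → ℝ) → ℝ} {με : Measure ℝ}
  {Nstar : (Fin (p - 1) → ℝ) → ℝ} {Nb : (Fin q → ℝ) → ℝ}

lemma exists_integral_z1_oneStep_le [IsProbabilityMeasure με] (hp : 1 ≤ p) {r M₀ K₀ ρ s P : ℝ}
    (hg : IsPolynomialContraction g r M₀ K₀ ρ) (hvol : IsVolatilitySpec p q ω αc ζ)
    (hNb : IsVectorNorm Nb) (hs : 1 ≤ s) (hP : (2 * s - ρ) / (2 - ρ) ≤ P)
    (hε : MemLp id (ENNReal.ofReal (2 * s)) με) (hmean : ∫ e, e ∂με = 0) :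
    ∃ C : ℝ, 0 ≤ C ∧ ∀ x,
      ∫ e, |z1 p q πc (oneStep p q πc g ω αc ζ x e)| ^ (2 * s) ∂με ≤
        |z1 p q πc x| ^ (2 * s) - r / 2 * |z1 p q πc x| ^ (2 * s - ρ)
          + C * (1 + Nb (xiVec p q πc g x) ^ P) := by
  obtain ⟨c, hc, hσ⟩ := exists_sigma2_le_add_mul (πc := πc) (g := g) hvol hNb
  obtain ⟨C, hC, hdrift⟩ :=
    hg.exists_integral_abs_add_sqrt_mul_rpow_le hs hP hvol.intercept_nonneg hc hε hmean
  refine ⟨C, hC, fun x => ?_⟩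
  simp only [z1_oneStep hp]
  exact hdrift _ _ _ (sigma2_nonneg hvol x) (hNb.nonneg _) (hσ x)

lemma exists_z2_oneStep_rpow_le (hNstar : IsVectorNorm Nstar)
    (hPi : inducedMatNorm Nstar (piMatOne p πc) < 1) {κ : ℝ} (hκ : 0 < κ) :
    ∃ l ∈ Set.Ico (0 : ℝ) 1, ∃ C : ℝ, 0 ≤ C ∧ ∀ x e,
      Nstar (z2 p q (oneStep p q πc g ω αc ζ x e)) ^ κ ≤
        l * Nstar (z2 p q x) ^ κ + C * |z1 p q πc x| ^ κ := by
  obtain ⟨l, ⟨hl₀, hl₁⟩, hl⟩ := hNstar.exists_mulVec_le_of_inducedMatNorm_lt_one hPi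
  obtain ⟨δ, hδ, hδl⟩ :=
    exists_one_add_mul_mem_Ico ⟨Real.rpow_nonneg hl₀ κ, Real.rpow_lt_one hl₀ hl₁ hκ⟩
  obtain ⟨C, hC, hsplit⟩ := exists_add_rpow_le hκ hδ
  set n₁ := Nstar (firstBasisVec (p - 1))
  have hn₁ : 0 ≤ n₁ := hNstar.nonneg _
  refine ⟨_, hδl, C * n₁ ^ κ, by positivity, fun x e => ?_⟩
  have hw := hNstar.nonneg (z2 p q x)
  have hstep : Nstar (z2 p q (oneStep p q πc g ω αc ζ x e)) ≤
      l * Nstar (z2 p q x) + |z1 p q πc x| * n₁ := by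
    rw [z2_oneStep, ← hNstar.map_smul]
    exact (hNstar.add_le _ _).trans (by gcongr; exact hl _)
  calc Nstar (z2 p q (oneStep p q πc g ω αc ζ x e)) ^ κ
      ≤ (l * Nstar (z2 p q x) + |z1 p q πc x| * n₁) ^ κ :=
        Real.rpow_le_rpow (hNstar.nonneg _) hstep hκ.le
    _ ≤ (1 + δ) * (l * Nstar (z2 p q x)) ^ κ + C * (|z1 p q πc x| * n₁) ^ κ :=
        hsplit _ _ (by positivity) (by positivity)
    _ = _ := by
        rw [Real.mul_rpow hl₀ hw, Real.mul_rpow (abs_nonneg _) hn₁]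
        ring

lemma exists_lambdaMat_mulVec_le (hNb : IsVectorNorm Nb) (αc : ℕ → ℝ) :
    ∃ C : ℝ, 0 ≤ C ∧ ∀ e v, Nb ((lambdaMat q αc e).mulVec v) ≤ C * Nb v * (1 + e ^ 2) := by
  obtain ⟨C₀, hC₀, hshift⟩ := hNb.exists_mulVec_le (companionMat 0)
  obtain ⟨C₁, hC₁, hdot⟩ := hNb.exists_abs_dotProduct_le (lagCoeffs q αc)
  have hfirst := hNb.nonneg (firstBasisVec q)
  refine ⟨C₀ + C₁ * Nb (firstBasisVec q), by positivity, fun e v => ?_⟩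
  rw [lambdaMat_mulVec]
  refine (hNb.add_sq_smul_le _ _ e).trans ?_
  have hrank_one := mul_le_mul_of_nonneg_right (hdot v) hfirst
  rw [hNb.map_smul]
  gcongr
  linarith [hshift v]

lemma integrable_lambdaMat_mulVec_rpow (hNb : IsVectorNorm Nb) {P : ℝ} (hP : 0 ≤ P)
    (hε : Integrable (fun e => (1 + e ^ 2) ^ P) με) (αc : ℕ → ℝ) (v : Fin q → ℝ) :
    Integrable (fun e => Nb ((lambdaMat q αc e).mulVec v) ^ P) με := by
  simp only [lambdaMat_mulVec]
  exact hNb.integrable_add_sq_smul_rpow hP hε _ _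

lemma exists_root_integral_lambdaMat_mulVec_rpow_le (hNb : IsVectorNorm Nb) {P : ℝ} (hP : 0 < P)
    (hε : Integrable (fun e => (1 + e ^ 2) ^ P) με) (αc : ℕ → ℝ) :
    ∃ C : ℝ, ∀ v, (∫ e, Nb ((lambdaMat q αc e).mulVec v) ^ P ∂με) ^ (1 / P) ≤ C * Nb v := by
  obtain ⟨C, hC, hΛ⟩ := exists_lambdaMat_mulVec_le hNb αc
  set M := ∫ e, (1 + e ^ 2) ^ P ∂με
  have hM : 0 ≤ M := integral_nonneg fun e => by positivity
  refine ⟨C * M ^ (1 / P), fun v => ?_⟩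
  have hCv : 0 ≤ C * Nb v := mul_nonneg hC (hNb.nonneg v)
  have hmoment : ∫ e, Nb ((lambdaMat q αc e).mulVec v) ^ P ∂με ≤ (C * Nb v) ^ P * M := by
    rw [← integral_const_mul]
    refine integral_mono (integrable_lambdaMat_mulVec_rpow hNb hP.le hε αc v)
      (hε.const_mul _) fun e => ?_
    dsimp only
    rw [← Real.mul_rpow hCv (by positivity)]
    exact Real.rpow_le_rpow (hNb.nonneg _) (hΛ e v) hP.le
  calc (∫ e, Nb ((lambdaMat q αc e).mulVec v) ^ P ∂με) ^ (1 / P)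
      ≤ ((C * Nb v) ^ P * M) ^ (1 / P) :=
        Real.rpow_le_rpow (integral_nonneg fun e => Real.rpow_nonneg (hNb.nonneg _) _) hmoment
          (by positivity)
    _ = C * M ^ (1 / P) * Nb v := by
        rw [Real.mul_rpow (by positivity) hM, one_div, Real.rpow_rpow_inv hCv hP.ne']
        ring

lemma exists_integral_lambdaMat_mulVec_rpow_le (hNb : IsVectorNorm Nb) {P : ℝ} (hP : 0 < P)
    (hε : Integrable (fun e => (1 + e ^ 2) ^ P) με)
    (hsup : sSup {c : ℝ | ∃ v : Fin q → ℝ, Nb v = 1 ∧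
      c = (∫ e, Nb ((lambdaMat q αc e).mulVec v) ^ P ∂με) ^ (1 / P)} < 1) :
    ∃ ν ∈ Set.Ico (0 : ℝ) 1, ∀ v,
      ∫ e, Nb ((lambdaMat q αc e).mulVec v) ^ P ∂με ≤ ν * Nb v ^ P := by
  set J : (Fin q → ℝ) → ℝ := fun v => ∫ e, Nb ((lambdaMat q αc e).mulVec v) ^ P ∂με with hJ_def
  have hJ_nonneg : ∀ v, 0 ≤ J v := fun v =>
    integral_nonneg fun e => Real.rpow_nonneg (hNb.nonneg _) _
  have hJ_smul : ∀ (c : ℝ) v, J (c • v) ^ (1 / P) = |c| * J v ^ (1 / P) := fun c v => by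
    simp only [hJ_def, Matrix.mulVec_smul, hNb.map_smul,
      Real.mul_rpow (abs_nonneg _) (hNb.nonneg _), integral_const_mul]
    rw [Real.mul_rpow (by positivity) (hJ_nonneg v), one_div,
      Real.rpow_rpow_inv (abs_nonneg c) hP.ne']
  obtain ⟨C, hC⟩ := exists_root_integral_lambdaMat_mulVec_rpow_le hNb hP hε αc
  obtain ⟨l, ⟨hl₀, hl₁⟩, hl⟩ := hNb.exists_le_mul_of_sSup_lt_one hJ_smul hC hsup
  refine ⟨l ^ P, ⟨by positivity, Real.rpow_lt_one hl₀ hl₁ hP⟩, fun v => ?_⟩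
  have hpow := Real.rpow_le_rpow (Real.rpow_nonneg (hJ_nonneg v) _) (hl v) hP.le
  rwa [one_div, Real.rpow_inv_rpow (hJ_nonneg v) hP.ne', Real.mul_rpow hl₀ (hNb.nonneg v)]
    at hpow

lemma integrable_xiVec_oneStep_rpow (hp : 1 ≤ p) (hvol : IsVolatilitySpec p q ω αc ζ)
    (hNb : IsVectorNorm Nb) {P : ℝ} (hP : 0 ≤ P)
    (hε : Integrable (fun e => (1 + e ^ 2) ^ P) με) (x : Fin (p + q) → ℝ) :
    Integrable (fun e => Nb (xiVec p q πc g (oneStep p q πc g ω αc ζ x e)) ^ P) με := by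
  simp only [xiVec_oneStep hp hvol]
  exact hNb.integrable_add_sq_smul_rpow hP hε _ _

lemma exists_integral_xiVec_oneStep_le [IsFiniteMeasure με] (hp : 1 ≤ p)
    (hvol : IsVolatilitySpec p q ω αc ζ) (hNb : IsVectorNorm Nb) (hmono : IsMonotoneNorm Nb)
    {P : ℝ} (hP : 0 < P) (hε : MemLp id (ENNReal.ofReal (2 * P)) με)
    (hsup : sSup {c : ℝ | ∃ v : Fin q → ℝ, Nb v = 1 ∧
      c = (∫ e, Nb ((lambdaMat q αc e).mulVec v) ^ P ∂με) ^ (1 / P)} < 1) :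
    ∃ ν ∈ Set.Ico (0 : ℝ) 1, ∃ C : ℝ, 0 ≤ C ∧ ∀ x,
      ∫ e, Nb (xiVec p q πc g (oneStep p q πc g ω αc ζ x e)) ^ P ∂με ≤
        ν * Nb (xiVec p q πc g x) ^ P + C := by
  have hε_one_add : Integrable (fun e => (1 + e ^ 2) ^ P) με := integrable_one_add_sq_rpow hP hε
  have hε_pow : Integrable (fun e => |e| ^ (2 * P)) με :=
    integrable_abs_rpow_of_memLp (by positivity) hε
  obtain ⟨ν, hν, hΛ⟩ := exists_integral_lambdaMat_mulVec_rpow_le hNb hP hε_one_add hsup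
  obtain ⟨δ, hδ, hδν⟩ := exists_one_add_mul_mem_Ico hν
  obtain ⟨C, hC, hsplit⟩ := exists_add_rpow_le hP hδ
  set n₁ := Nb (firstBasisVec q)
  have hωn₁ : 0 ≤ ω * n₁ := mul_nonneg hvol.intercept_nonneg (hNb.nonneg _)
  refine ⟨_, hδν, C * (ω * n₁) ^ P * ∫ e, |e| ^ (2 * P) ∂με,
    mul_nonneg (by positivity) (integral_nonneg fun e => by positivity), fun x => ?_⟩
  have hΛ_int := (integrable_lambdaMat_mulVec_rpow hNb hP.le hε_one_add αc
    (xiVec p q πc g x)).const_mul (1 + δ)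
  have hpointwise : ∀ e, Nb (xiVec p q πc g (oneStep p q πc g ω αc ζ x e)) ^ P ≤
      (1 + δ) * Nb ((lambdaMat q αc e).mulVec (xiVec p q πc g x)) ^ P
        + C * (ω * n₁) ^ P * |e| ^ (2 * P) := fun e => by
    rw [mul_assoc C, ← sq_rpow, ← Real.mul_rpow hωn₁ (sq_nonneg e), mul_right_comm ω]
    exact (Real.rpow_le_rpow (hNb.nonneg _) (xiVec_oneStep_norm_le hp hvol hNb hmono x e)
      hP.le).trans (hsplit _ _ (hNb.nonneg _) (by rw [mul_right_comm]; positivity))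
  calc ∫ e, Nb (xiVec p q πc g (oneStep p q πc g ω αc ζ x e)) ^ P ∂με
      ≤ ∫ e, (1 + δ) * Nb ((lambdaMat q αc e).mulVec (xiVec p q πc g x)) ^ P
          + C * (ω * n₁) ^ P * |e| ^ (2 * P) ∂με :=
        integral_mono (integrable_xiVec_oneStep_rpow hp hvol hNb hP.le hε_one_add x)
          (hΛ_int.add (hε_pow.const_mul _)) hpointwise
    _ = (1 + δ) * ∫ e, Nb ((lambdaMat q αc e).mulVec (xiVec p q πc g x)) ^ P ∂με
          + C * (ω * n₁) ^ P * ∫ e, |e| ^ (2 * P) ∂με := by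
        rw [integral_add hΛ_int (hε_pow.const_mul _), integral_const_mul, integral_const_mul]
    _ ≤ _ := by
        rw [mul_assoc (1 + δ)]
        gcongr
        exact hΛ _

end ComponentDrifts

section DriftAssembly

lemma rpow_le_one_add {v α : ℝ} (hv : 0 ≤ v) (hα : α ∈ Set.Ioc (0 : ℝ) 1) : v ^ α ≤ 1 + v :=
  calc v ^ α ≤ (1 + v) ^ α := Real.rpow_le_rpow hv (by linarith) hα.1.le
    _ ≤ 1 + v := Real.rpow_le_self_of_one_le (by linarith) hα.2

lemma one_add_add_rpow_le {z y α : ℝ} (hz : 0 ≤ z) (hy : 0 ≤ y) (hα : α ∈ Set.Ioc (0 : ℝ) 1) :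
    (1 + z + y) ^ α ≤ z ^ α + (1 + y) :=
  calc (1 + z + y) ^ α = (z + (1 + y)) ^ α := by ring_nf
    _ ≤ z ^ α + (1 + y) ^ α :=
        Real.rpow_add_le_add_rpow hz (by positivity) hα.1.le hα.2
    _ ≤ z ^ α + (1 + y) := by
        gcongr
        exact Real.rpow_le_self_of_one_le (by linarith) hα.2

lemma exists_nat_forall_le_weighted_sum {s₁ s₂ α : ℝ} (hs₁ : 0 < s₁) (hs₂ : 0 < s₂)
    (hα : α ∈ Set.Ioc (0 : ℝ) 1) (R : ℝ) :
    ∃ N : ℕ, 1 ≤ N ∧ ∀ z w v : ℝ, 0 ≤ z → 0 ≤ w → 0 ≤ v →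
      ¬ (z ≤ N ∧ w ≤ N ∧ v ^ α ≤ N) → R ≤ z ^ α + s₁ * w + s₂ * v := by
  have hcast : Tendsto (fun n : ℕ => (n : ℝ)) atTop atTop := tendsto_natCast_atTop_atTop
  obtain ⟨N, hNz, hNw, hNv, hN⟩ :=
    ((((tendsto_rpow_atTop hα.1).comp hcast).eventually_ge_atTop R).and
      ((hcast.eventually_ge_atTop (R / s₁)).and
        ((hcast.eventually_ge_atTop (R / s₂ + 1)).and (eventually_ge_atTop 1)))).exists
  refine ⟨N, hN, fun z w v hz hw hv hout => ?_⟩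
  have hzα : 0 ≤ z ^ α := by positivity
  have hsw : 0 ≤ s₁ * w := by positivity
  have hsv : 0 ≤ s₂ * v := by positivity
  rcases not_and_or.1 hout with hz_large | hout
  · have hzN : (N : ℝ) ^ α ≤ z ^ α :=
      Real.rpow_le_rpow N.cast_nonneg (not_le.1 hz_large).le hα.1.le
    have hRN : R ≤ (N : ℝ) ^ α := hNz
    linarith
  rcases not_and_or.1 hout with hw_large | hv_large
  · have hRw : R ≤ s₁ * w := (div_le_iff₀' hs₁).1 (hNw.trans (not_le.1 hw_large).le)
    linarith
  · have hRv : R ≤ s₂ * v :=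
      (div_le_iff₀' hs₂).1 (by linarith [rpow_le_one_add hv hα, not_le.1 hv_large])
    linarith

variable {ι : Type*} {z w v : ι → ℝ} {α : ℝ}

-- The coupling is triangular: a small `s₁` makes the input of `z` into `w` negligible against the
-- decrease of `z`, and a large `s₂` makes the contraction of `v` pay for its input into `z`.
lemma exists_weights_add_le {Ez Ew Ev : ι → ℝ} {r C₁ C₂ C₃ l ν : ℝ}
    (hz : ∀ x, 0 ≤ z x) (hw : ∀ x, 0 ≤ w x) (hv : ∀ x, 0 ≤ v x) (hr : 0 < r) (hC₁ : 0 ≤ C₁)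
    (hC₂ : 0 ≤ C₂) (hl : l < 1) (hν : ν < 1)
    (hEz : ∀ x, Ez x ≤ z x - r * z x ^ α + C₁ * (1 + v x))
    (hEw : ∀ x, Ew x ≤ l * w x + C₂ * z x ^ α) (hEv : ∀ x, Ev x ≤ ν * v x + C₃) :
    ∃ s₁ : ℝ, 0 < s₁ ∧ ∃ s₂ : ℝ, 0 < s₂ ∧ ∃ a : ℝ, 0 < a ∧ ∃ C : ℝ, ∀ x,
      1 + Ez x + s₁ * Ew x + s₂ * Ev x ≤
        1 + z x + s₁ * w x + s₂ * v x - a * (z x ^ α + s₁ * w x + s₂ * v x) + C := by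
  have hl' : 0 < 1 - l := sub_pos.2 hl
  have hν' : 0 < 1 - ν := sub_pos.2 hν
  obtain ⟨s₁, hs₁, hs₁C₂⟩ : ∃ s₁ : ℝ, 0 < s₁ ∧ s₁ * C₂ ≤ r / 2 := by
    refine ⟨r / (2 * (C₂ + 1)), by positivity, ?_⟩
    rw [div_mul_eq_mul_div, div_le_div_iff₀ (by positivity) two_pos]
    nlinarith
  obtain ⟨s₂, hs₂, hs₂C₁⟩ : ∃ s₂ : ℝ, 0 < s₂ ∧ C₁ ≤ s₂ * ((1 - ν) / 2) := by
    refine ⟨C₁ / ((1 - ν) / 2) + 1,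
      add_pos_of_nonneg_of_pos (div_nonneg hC₁ (half_pos hν').le) one_pos, ?_⟩
    rw [add_mul, div_mul_cancel₀ _ (half_pos hν').ne']
    linarith
  obtain ⟨a, ha, har, hal, haν⟩ : ∃ a : ℝ, 0 < a ∧ a ≤ r / 2 ∧ a ≤ 1 - l ∧ a ≤ (1 - ν) / 2 :=
    ⟨min (r / 2) (min (1 - l) ((1 - ν) / 2)), lt_min (half_pos hr) (lt_min hl' (half_pos hν')),
      min_le_left _ _,
      (min_le_right _ _).trans (min_le_left _ _), (min_le_right _ _).trans (min_le_right _ _)⟩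
  refine ⟨s₁, hs₁, s₂, hs₂, a, ha, C₁ + s₂ * C₃, fun x => ?_⟩
  have hzα : 0 ≤ z x ^ α := Real.rpow_nonneg (hz x) α
  have hz_loss : (a + s₁ * C₂) * z x ^ α ≤ r * z x ^ α := by gcongr; linarith
  have hw_loss : a * (s₁ * w x) ≤ (1 - l) * (s₁ * w x) := by
    gcongr
    exact mul_nonneg hs₁.le (hw x)
  have hv_loss : (a * s₂ + C₁) * v x ≤ (1 - ν) * s₂ * v x := by
    gcongr
    · exact hv x
    · nlinarith
  linarith [hEz x, mul_le_mul_of_nonneg_left (hEw x) hs₁.le,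
    mul_le_mul_of_nonneg_left (hEv x) hs₂.le]

lemma exists_subgeometric_drift_of_le {EV : ι → ℝ} {s₁ s₂ a C : ℝ}
    (hz : ∀ x, 0 ≤ z x) (hw : ∀ x, 0 ≤ w x) (hv : ∀ x, 0 ≤ v x) (hα : α ∈ Set.Ioc (0 : ℝ) 1)
    (hs₁ : 0 < s₁) (hs₂ : 0 < s₂) (ha : 0 < a)
    (hEV : ∀ x, EV x ≤ 1 + z x + s₁ * w x + s₂ * v x
      - a * (z x ^ α + s₁ * w x + s₂ * v x) + C) :
    ∃ et : ℝ, 0 < et ∧ ∃ N : ℕ, 1 ≤ N ∧ ∃ bt : ℝ, ∀ x,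
      EV x ≤ 1 + z x + s₁ * w x + s₂ * v x - et * (1 + z x + s₁ * w x + s₂ * v x) ^ α
        + Set.indicator {y | z y ≤ N ∧ w y ≤ N ∧ v y ^ α ≤ N} (fun _ => bt) x := by
  obtain ⟨N, hN, hout⟩ :=
    exists_nat_forall_le_weighted_sum hs₁ hs₂ hα ((C + a / 2) / (a / 2))
  refine ⟨a / 2, by positivity, N, hN, C + a / 2, fun x => ?_⟩
  have hzα : 0 ≤ z x ^ α := Real.rpow_nonneg (hz x) α
  have hsw : 0 ≤ s₁ * w x := mul_nonneg hs₁.le (hw x)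
  have hsv : 0 ≤ s₂ * v x := mul_nonneg hs₂.le (hv x)
  -- One half of the decrease dominates `V ^ α`; the other half beats the constant off the set.
  have hhalf : EV x ≤ 1 + z x + s₁ * w x + s₂ * v x
      - a / 2 * (1 + z x + s₁ * w x + s₂ * v x) ^ α
      + (C + a / 2 - a / 2 * (z x ^ α + s₁ * w x + s₂ * v x)) := by
    have hVα := one_add_add_rpow_le (hz x) (add_nonneg hsw hsv) hα
    rw [← add_assoc (1 + z x)] at hVα
    linarith [hEV x, mul_le_mul_of_nonneg_left hVα (half_pos ha).le]
  by_cases hx : z x ≤ N ∧ w x ≤ N ∧ v x ^ α ≤ N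
  · rw [Set.indicator_of_mem (by exact hx)]
    linarith [mul_nonneg (half_pos ha).le (add_nonneg (add_nonneg hzα hsw) hsv)]
  · rw [Set.indicator_of_notMem (by exact hx)]
    linarith [(div_le_iff₀' (half_pos ha)).1 (hout _ _ _ (hz x) (hw x) (hv x) hx)]

end DriftAssembly

section DriftFunction

variable {p q : ℕ} {πc : ℕ → ℝ} {g : ℝ → ℝ} {ω : ℝ} {αc : ℕ → ℝ}
  {ζ : ℕ → (Fin (p + q) → ℝ) → ℝ} {με : Measure ℝ}
  {Nstar : (Fin (p - 1) → ℝ) → ℝ} {Nb : (Fin q → ℝ) → ℝ} {s₀ b : ℝ}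

lemma integrable_z1_oneStep_rpow [IsFiniteMeasure με] (hp : 1 ≤ p) {m : ℝ} (hm : 0 < m)
    (hε : MemLp id (ENNReal.ofReal m) με) (x : Fin (p + q) → ℝ) :
    Integrable (fun e => |z1 p q πc (oneStep p q πc g ω αc ζ x e)| ^ m) με := by
  simp only [z1_oneStep hp]
  exact integrable_abs_add_mul_rpow hm hε _ _

lemma integrable_Vfun_oneStep [IsFiniteMeasure με] (hp : 1 ≤ p)
    (hvol : IsVolatilitySpec p q ω αc ζ) (hNb : IsVectorNorm Nb) (hs₀ : 0 < s₀) (hb : 0 < b)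
    (hε : MemLp id (ENNReal.ofReal (2 * s₀)) με)
    (hε' : MemLp id (ENNReal.ofReal (2 * (b * s₀))) με) (s₁ s₂ α : ℝ) (x : Fin (p + q) → ℝ) :
    Integrable (fun e => Vfun p q πc g s₁ s₂ s₀ b α Nstar Nb (oneStep p q πc g ω αc ζ x e))
      με := by
  have hz₁ := integrable_z1_oneStep_rpow (πc := πc) (g := g) (ω := ω) (αc := αc) (ζ := ζ)
    hp (by positivity) hε x
  have hξ := integrable_xiVec_oneStep_rpow (πc := πc) (g := g) hp hvol hNb (by positivity)
    (integrable_one_add_sq_rpow (by positivity) hε') x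
  simp only [Vfun, z2_oneStep]
  exact (((integrable_const _).add hz₁).add (integrable_const _)).add (hξ.const_mul _)

lemma integral_Vfun_oneStep [IsProbabilityMeasure με] (hp : 1 ≤ p)
    (hvol : IsVolatilitySpec p q ω αc ζ) (hNb : IsVectorNorm Nb) (hs₀ : 0 < s₀) (hb : 0 < b)
    (hε : MemLp id (ENNReal.ofReal (2 * s₀)) με)
    (hε' : MemLp id (ENNReal.ofReal (2 * (b * s₀))) με) (s₁ s₂ α : ℝ) (x : Fin (p + q) → ℝ) :
    ∫ e, Vfun p q πc g s₁ s₂ s₀ b α Nstar Nb (oneStep p q πc g ω αc ζ x e) ∂με =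
      1 + ∫ e, |z1 p q πc (oneStep p q πc g ω αc ζ x e)| ^ (2 * s₀) ∂με
        + s₁ * Nstar (z2 p q (oneStep p q πc g ω αc ζ x 0)) ^ (2 * s₀ * α)
        + s₂ * ∫ e, Nb (xiVec p q πc g (oneStep p q πc g ω αc ζ x e)) ^ (b * s₀) ∂με := by
  have hz₁ := integrable_z1_oneStep_rpow (πc := πc) (g := g) (ω := ω) (αc := αc) (ζ := ζ)
    hp (by positivity) hε x
  have hξ := integrable_xiVec_oneStep_rpow (πc := πc) (g := g) hp hvol hNb (by positivity)
    (integrable_one_add_sq_rpow (by positivity) hε') x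
  have hconst_z₁ := (integrable_const (μ := με) (1 : ℝ)).add hz₁
  simp only [Vfun, z2_oneStep]
  rw [integral_add (by exact hconst_z₁.add (integrable_const _)) (hξ.const_mul _),
    integral_add (by exact hconst_z₁) (integrable_const _),
    integral_add (integrable_const _) hz₁]
  simp only [integral_const, integral_const_mul, probReal_univ, one_smul]

lemma one_sub_div_mem_Ioc {ρ : ℝ} (hρ : 0 < ρ) (hρ₂ : ρ < 2) (hs₀ : 1 ≤ s₀) :
    1 - ρ / (2 * s₀) ∈ Set.Ioc (0 : ℝ) 1 :=
  ⟨sub_pos.2 ((div_lt_one (by linarith)).2 (by linarith)), sub_le_self _ (by positivity)⟩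

lemma ConstsOK.div_le_mul {ρ : ℝ} (h : ConstsOK s₀ b ρ) (hρ₂ : ρ < 2) :
    (2 * s₀ - ρ) / (2 - ρ) ≤ b * s₀ := by
  obtain ⟨hs₀, -, hb_of_eq, hb_of_lt⟩ := h
  have hρ' : 0 < 2 - ρ := sub_pos.2 hρ₂
  rcases hs₀.eq_or_lt with rfl | hs₀_lt
  · rw [hb_of_eq rfl, mul_one, mul_one, div_self hρ'.ne']
  · have hb := (div_lt_iff₀ (mul_pos (by linarith) hρ')).1 (hb_of_lt hs₀_lt)
    exact (div_le_iff₀ hρ').2 (by linarith)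

lemma Assump4.memLp (h : Assump4 q αc με b s₀ Nb) (hP : 0 < b * s₀) :
    MemLp id (ENNReal.ofReal (2 * (b * s₀))) με :=
  memLp_of_integrable_abs_rpow (by positivity) aestronglyMeasurable_id
    (by simpa only [id, mul_assoc] using h.2.2.1)

lemma exists_weights_integral_Vfun_oneStep_le [IsProbabilityMeasure με] {r M₀ K₀ ρ : ℝ}
    (hp : 1 ≤ p) (hmean : ∫ e, e ∂με = 0) (hg : IsPolynomialContraction g r M₀ K₀ ρ)
    (hvol : IsVolatilitySpec p q ω αc ζ) (hs₀ : 1 ≤ s₀)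
    (hb : (2 * s₀ - ρ) / (2 - ρ) ≤ b * s₀) (hNstar : IsVectorNorm Nstar)
    (hNstarop : inducedMatNorm Nstar (piMatOne p πc) < 1) (hA4 : Assump4 q αc με b s₀ Nb)
    {α : ℝ} (hα : 2 * s₀ * α = 2 * s₀ - ρ) :
    ∃ s₁ : ℝ, 0 < s₁ ∧ ∃ s₂ : ℝ, 0 < s₂ ∧ ∃ a : ℝ, 0 < a ∧ ∃ C : ℝ, ∀ x,
      Integrable (fun e => Vfun p q πc g s₁ s₂ s₀ b α Nstar Nb (oneStep p q πc g ω αc ζ x e))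
        με ∧
      ∫ e, Vfun p q πc g s₁ s₂ s₀ b α Nstar Nb (oneStep p q πc g ω αc ζ x e) ∂με ≤
        Vfun p q πc g s₁ s₂ s₀ b α Nstar Nb x
          - a * ((|z1 p q πc x| ^ (2 * s₀)) ^ α + s₁ * Nstar (z2 p q x) ^ (2 * s₀ * α)
            + s₂ * Nb (xiVec p q πc g x) ^ (b * s₀)) + C := by
  have hρ := hg.order_pos
  have hρ₂ := hg.order_lt_two
  have hs₀P : s₀ ≤ b * s₀ := hb.trans' ((le_div_iff₀ (by linarith)).2 (by nlinarith))
  have hb_pos : 0 < b := pos_of_mul_pos_left (by linarith) (by linarith : 0 ≤ s₀)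
  have hεP := hA4.memLp (by linarith)
  have hε : MemLp id (ENNReal.ofReal (2 * s₀)) με :=
    hεP.mono_exponent (ENNReal.ofReal_le_ofReal (by linarith))
  obtain ⟨hNb, hmono, -, hsup⟩ := hA4
  obtain ⟨C₁, hC₁, hdrift_z₁⟩ :=
    exists_integral_z1_oneStep_le (πc := πc) hp hg hvol hNb hs₀ hb hε hmean
  obtain ⟨l, ⟨-, hl⟩, C₂, hC₂, hdrift_z₂⟩ := exists_z2_oneStep_rpow_le (g := g) (ω := ω)
    (αc := αc) (ζ := ζ) hNstar hNstarop (by linarith : 0 < 2 * s₀ * α)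
  obtain ⟨ν, ⟨-, hν⟩, C₃, -, hdrift_ξ⟩ := exists_integral_xiVec_oneStep_le (πc := πc) (g := g)
    hp hvol hNb hmono (by linarith) hεP hsup
  simp only [← hα, Real.rpow_mul (abs_nonneg (z1 p q πc _)) (2 * s₀) α] at hdrift_z₁ hdrift_z₂
  obtain ⟨s₁, hs₁, s₂, hs₂, a, ha, C, hdrift⟩ := exists_weights_add_le
    (fun x => Real.rpow_nonneg (abs_nonneg (z1 p q πc x)) (2 * s₀))
    (fun x => Real.rpow_nonneg (hNstar.nonneg (z2 p q x)) (2 * s₀ * α))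
    (fun x => Real.rpow_nonneg (hNb.nonneg (xiVec p q πc g x)) (b * s₀))
    (half_pos hg.rate_pos) hC₁ hC₂ hl hν hdrift_z₁ (fun x => hdrift_z₂ x 0) hdrift_ξ
  refine ⟨s₁, hs₁, s₂, hs₂, a, ha, C, fun x =>
    ⟨integrable_Vfun_oneStep hp hvol hNb (by linarith) hb_pos hε hεP s₁ s₂ α x, ?_⟩⟩
  rw [integral_Vfun_oneStep hp hvol hNb (by linarith) hb_pos hε hεP]
  exact hdrift x

theorem stmt_14_general [IsProbabilityMeasure με] {r M₀ K₀ ρ : ℝ} (hp : 1 ≤ p)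
    (hmean : ∫ e, e ∂με = 0) (hg : IsPolynomialContraction g r M₀ K₀ ρ)
    (hvol : IsVolatilitySpec p q ω αc ζ) (hs₀ : 1 ≤ s₀)
    (hb : (2 * s₀ - ρ) / (2 - ρ) ≤ b * s₀) (hNstar : IsVectorNorm Nstar)
    (hNstarop : inducedMatNorm Nstar (piMatOne p πc) < 1) (hA4 : Assump4 q αc με b s₀ Nb) :
    ∃ s₁ : ℝ, 0 < s₁ ∧ ∃ s₂ : ℝ, 0 < s₂ ∧ ∃ et : ℝ, 0 < et ∧
    ∃ N : ℕ, 1 ≤ N ∧ ∃ bt : ℝ,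
      ∀ x : Fin (p + q) → ℝ,
        Integrable (fun e => Vfun p q πc g s₁ s₂ s₀ b (1 - ρ / (2 * s₀)) Nstar Nb
          (oneStep p q πc g ω αc ζ x e)) με ∧
        (∫ e, Vfun p q πc g s₁ s₂ s₀ b (1 - ρ / (2 * s₀)) Nstar Nb
            (oneStep p q πc g ω αc ζ x e) ∂με)
          ≤ Vfun p q πc g s₁ s₂ s₀ b (1 - ρ / (2 * s₀)) Nstar Nb x
            - et * (Vfun p q πc g s₁ s₂ s₀ b (1 - ρ / (2 * s₀)) Nstar Nb x)
                ^ (1 - ρ / (2 * s₀))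
            + Set.indicator
                {y : Fin (p + q) → ℝ |
                  |z1 p q πc y| ^ (2 * s₀) ≤ (N : ℝ) ∧
                  Nstar (z2 p q y) ^ (2 * s₀ * (1 - ρ / (2 * s₀))) ≤ (N : ℝ) ∧
                  Nb (xiVec p q πc g y) ^ (b * s₀ * (1 - ρ / (2 * s₀))) ≤ (N : ℝ)}
                (fun _ => bt) x := by
  have hα := one_sub_div_mem_Ioc hg.order_pos hg.order_lt_two hs₀
  obtain ⟨s₁, hs₁, s₂, hs₂, a, ha, C, hdrift⟩ := exists_weights_integral_Vfun_oneStep_le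
    hp hmean hg hvol hs₀ hb hNstar hNstarop hA4
    (by field_simp : 2 * s₀ * (1 - ρ / (2 * s₀)) = 2 * s₀ - ρ)
  obtain ⟨et, het, N, hN, bt, hsub⟩ := exists_subgeometric_drift_of_le
    (fun x => Real.rpow_nonneg (abs_nonneg (z1 p q πc x)) (2 * s₀))
    (fun x => Real.rpow_nonneg (hNstar.nonneg (z2 p q x)) (2 * s₀ * (1 - ρ / (2 * s₀))))
    (fun x => Real.rpow_nonneg (hA4.1.nonneg (xiVec p q πc g x)) (b * s₀))
    hα hs₁ hs₂ ha fun x => (hdrift x).2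
  refine ⟨s₁, hs₁, s₂, hs₂, et, het, N, hN, bt, fun x => ⟨(hdrift x).1, ?_⟩⟩
  simpa only [Real.rpow_mul (hA4.1.nonneg _) (b * s₀), Vfun] using hsub x

end DriftFunction

open MeasureTheory Filter in
/-- under Assumptions 1–4 there are s₁, s₂, ẽ > 0, an integer N ≥ 1 and
b̃ < ∞ such that the drift function V satisfies Condition D:
E[V(Y₁) | Y₀ = x] ≤ V(x) − ẽV(x)^α + b̃1_{A_N}(x) for every x ∈ ℝ^{p+q}, where
A_N = {x : |z₁(x₁)|^{2s₀} ≤ N, ‖z₂(x₁)‖_*^{2s₀α} ≤ N, ‖ξ(x)‖_•^{bs₀α} ≤ N}. -/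
theorem stmt_14 (p q : ℕ) (hp : 1 ≤ p) (hq : 1 ≤ q)
    (πc : ℕ → ℝ) (g : ℝ → ℝ) (ω : ℝ) (αc : ℕ → ℝ)
    (ζ : ℕ → (Fin (p + q) → ℝ) → ℝ) (με : Measure ℝ)
    (r M₀ K₀ ρ s₀ b : ℝ)
    (Nstar : (Fin (p - 1) → ℝ) → ℝ) (Nb : (Fin q → ℝ) → ℝ)
    (hζmeas : ∀ i, Measurable (ζ i))
    (hA1 : Assump1 με)
    (hA2i : Assump2i p πc)
    (hA2ii : Assump2ii g r M₀ K₀ ρ)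
    (hA3 : Assump3 p q ω αc ζ)
    (hconst : ConstsOK s₀ b ρ)
    (hNstar : IsVectorNorm Nstar)
    (hNstarop : inducedMatNorm Nstar (piMatOne p πc) < 1)
    (hA4 : Assump4 q αc με b s₀ Nb) :
    ∃ s₁ : ℝ, 0 < s₁ ∧ ∃ s₂ : ℝ, 0 < s₂ ∧ ∃ et : ℝ, 0 < et ∧
    ∃ N : ℕ, 1 ≤ N ∧ ∃ bt : ℝ,
      ∀ x : Fin (p + q) → ℝ,
        (∫ e, Vfun p q πc g s₁ s₂ s₀ b (1 - ρ / (2 * s₀)) Nstar Nb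
            (oneStep p q πc g ω αc ζ x e) ∂με)
          ≤ Vfun p q πc g s₁ s₂ s₀ b (1 - ρ / (2 * s₀)) Nstar Nb x
            - et * (Vfun p q πc g s₁ s₂ s₀ b (1 - ρ / (2 * s₀)) Nstar Nb x)
                ^ (1 - ρ / (2 * s₀))
            + Set.indicator
                {y : Fin (p + q) → ℝ |
                  |z1 p q πc y| ^ (2 * s₀) ≤ (N : ℝ) ∧
                  Nstar (z2 p q y) ^ (2 * s₀ * (1 - ρ / (2 * s₀))) ≤ (N : ℝ) ∧
                  Nb (xiVec p q πc g y) ^ (b * s₀ * (1 - ρ / (2 * s₀))) ≤ (N : ℝ)}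
                (fun _ => bt) x := by
  obtain ⟨hprob, hmean, -⟩ := hA1
  obtain ⟨s₁, hs₁, s₂, hs₂, et, het, N, hN, bt, hdrift⟩ := stmt_14_general hp hmean
    hA2ii.isPolynomialContraction hA3.isVolatilitySpec hconst.1
    (hconst.div_le_mul hA2ii.isPolynomialContraction.order_lt_two) hNstar hNstarop hA4
  exact ⟨s₁, hs₁, s₂, hs₂, et, het, N, hN, bt, fun x => (hdrift x).2⟩
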